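/- arXiv:1301.6509 — 2 statements merged into one kernel-verified Lean document; each statement's English description precedes it below -/
import Mathlib

section
/- Let σ and τ be two non-crossing RGFs, each either empty or connected. Then for every n, the number of non-crossing RGFs of length n avoiding the pattern 1[σ]1[τ] equals the number of non-crossing RGFs of length n avoiding the pattern 1[τ]1[σ]. -/
/-- A restricted growth function (canonical sequential form of a set partition):
a word over the positive integers whose first letter is 1 and where each letter
is at most one more than the maximum of the preceding letters. -/
def IsRGF (w : List ℕ) : Prop :=
  (∀ x ∈ w, 1 ≤ x) ∧
  (w ≠ [] → w.getD 0 0 = 1) ∧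
  ∀ i, i + 1 < w.length → w.getD (i + 1) 0 ≤ ((w.take (i + 1)).foldr max 0) + 1

/-- Two words of the same length are order-isomorphic: corresponding entries
compare the same way (this preserves equalities as well). -/
def WordOrdIso (s t : List ℕ) : Prop :=
  s.length = t.length ∧
  ∀ i j, i < s.length → j < s.length →
    (s.getD i 0 < s.getD j 0 ↔ t.getD i 0 < t.getD j 0)

/-- `w` contains the pattern `p`: a subsequence of `w` is order-isomorphic to `p`. -/
def PatContains (w p : List ℕ) : Prop := ∃ s : List ℕ, s.Sublist w ∧ WordOrdIso s p

/-- `w` avoids the pattern `p`. -/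
def PatAvoids (w p : List ℕ) : Prop := ¬ PatContains w p

/-- `pCount n T` = number of RGFs of length `n` avoiding every pattern in `T`. -/
noncomputable def pCount (n : ℕ) (T : Set (List ℕ)) : ℕ :=
  {w : List ℕ | IsRGF w ∧ w.length = n ∧ ∀ p ∈ T, PatAvoids w p}.ncard

/-- A word is non-crossing if it avoids the pattern 1212. -/
def NonCrossing (w : List ℕ) : Prop := PatAvoids w [1,2,1,2]

/-- The number of distinct letters of an RGF equals its maximum letter. -/
def nLetters (w : List ℕ) : ℕ := w.foldr max 0

/-- `rgfComp a b` is the pattern `a[b]`: `a` followed by `b` shifted up by the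
number of distinct letters of `a`. -/
def rgfComp (a b : List ℕ) : List ℕ := a ++ b.map (· + nLetters a)

/-- A connected RGF: nonempty and not expressible as `σ[τ]` with `σ, τ` nonempty RGFs. -/
def Connected (w : List ℕ) : Prop :=
  w ≠ [] ∧ ¬ ∃ a b : List ℕ, IsRGF a ∧ IsRGF b ∧ a ≠ [] ∧ b ≠ [] ∧ w = rgfComp a b

/-- `w` decomposes as `σ₁[σ₂]⋯[σ_p]` with each `σ_i` a connected RGF. -/
def HasComponents (w : List ℕ) (p : ℕ) : Prop :=
  ∃ l : List (List ℕ), l.length = p ∧ (∀ c ∈ l, IsRGF c ∧ Connected c) ∧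
    w = l.foldr rgfComp []

/-- Number of non-crossing RGFs of length `n` with `p` components avoiding `σ`. -/
noncomputable def ncCount (n p : ℕ) (σ : List ℕ) : ℕ :=
  {w : List ℕ | IsRGF w ∧ NonCrossing w ∧ w.length = n ∧ PatAvoids w σ ∧
    HasComponents w p}.ncard

/-- cc-equivalence of patterns. -/
def ccEquiv (σ τ : List ℕ) : Prop := ∀ n p : ℕ, ncCount n p σ = ncCount n p τ

/-- Number of non-crossing RGFs of length `n` avoiding `σ`. -/
noncomputable def ncAvoidCount (n : ℕ) (σ : List ℕ) : ℕ :=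
  {w : List ℕ | IsRGF w ∧ NonCrossing w ∧ w.length = n ∧ PatAvoids w σ}.ncard

/-- Auxiliary: builds `1[σ₁]1[σ₂]⋯1[σ_k]1` with accumulated letter shift `s`. -/
def onePatAux : ℕ → List (List ℕ) → List ℕ
  | _, [] => [1]
  | s, c :: rest => 1 :: (c.map (· + s) ++ onePatAux (s + nLetters c) rest)

/-- The pattern `1[σ₁]1[σ₂]⋯1[σ_k]1`. -/
def onePat (l : List (List ℕ)) : List ℕ := onePatAux 1 l

/-- The pattern `1[σ]1[τ]`. -/
def pat2 (σ τ : List ℕ) : List ℕ :=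
  1 :: (σ.map (· + 1) ++ 1 :: τ.map (· + (1 + nLetters σ)))

/-!
A non-crossing restricted growth function is uniquely of the form `1[c₁]1[c₂]⋯1[c_k]`, where the
blocks `c_i` are again non-crossing restricted growth functions. Since `σ` and `τ` are
indecomposable, an occurrence of either of them, with a `1` in front and no further `1` inside,
lies in a single block. Hence the word avoids `1[σ]1[τ]` iff every `c_i` does and there are no
`i < j` with `σ` in `c_i` and `τ` in `c_j`. Reversing the order of the blocks exchanges the roles
of `σ` and `τ` in the second condition. To restore the first one, every block is replaced by its
image under a bijection from the avoiders of `1[σ]1[τ]` to those of `1[τ]1[σ]` that preserves the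
length and the containment of `σ` and of `τ`. Such a bijection exists in smaller lengths by
induction: a word that does not contain both `σ` and `τ` avoids both patterns, so only the words
containing both have to be counted, and their numbers agree because the totals do.
-/

open scoped List

section Sublist

variable {α : Type*} {a : α} {x y u v : List α}

theorem exists_append_of_append_cons_sublist_append (h : x ++ a :: y <+ u ++ v) (ha : a ∉ u) :
    ∃ x₁ x₂, x = x₁ ++ x₂ ∧ x₁ <+ u ∧ x₂ ++ a :: y <+ v := by
  obtain ⟨p, q, hpq, hp, hq⟩ := List.sublist_append_iff.1 h
  rcases List.append_eq_append_iff.1 hpq with ⟨r, rfl, hr⟩ | ⟨r, rfl, rfl⟩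
  · rcases List.cons_eq_append_iff.1 hr with ⟨rfl, rfl⟩ | ⟨r', rfl, -⟩
    · exact ⟨x, [], by simp, by simpa using hp, by simpa using hq⟩
    · exact absurd (hp.subset (by simp)) ha
  · exact ⟨p, r, rfl, hp, hq⟩

theorem exists_append_of_append_cons_sublist_append' (h : x ++ a :: y <+ u ++ v) (ha : a ∉ v) :
    ∃ y₁ y₂, y = y₁ ++ y₂ ∧ x ++ a :: y₁ <+ u ∧ y₂ <+ v := by
  obtain ⟨y₂, y₁, hy, h₂, h₁⟩ := exists_append_of_append_cons_sublist_append
    (x := y.reverse) (a := a) (y := x.reverse) (u := v.reverse) (v := u.reverse)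
    (by simpa using h.reverse) (by simpa using ha)
  refine ⟨y₁.reverse, y₂.reverse, by rw [← List.reverse_append, ← hy, List.reverse_reverse], ?_, ?_⟩
  · simpa using h₁.reverse
  · simpa using h₂.reverse

theorem cons_sublist_of_cons_sublist_append (h : a :: y <+ u ++ v) (ha : a ∉ u) : a :: y <+ v := by
  obtain ⟨x₁, x₂, hx, -, h⟩ :=
    exists_append_of_append_cons_sublist_append (x := []) (by simpa using h) ha
  obtain ⟨rfl, rfl⟩ := List.append_eq_nil_iff.1 hx.symm
  exact h

theorem finite_setOf_forall_mem_and_length_eq {s : Set α} (hs : s.Finite) (n : ℕ) :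
    {w : List α | (∀ x ∈ w, x ∈ s) ∧ w.length = n}.Finite := by
  have := hs.to_subtype
  refine ((List.finite_length_eq s n).image (List.map (↑))).subset ?_
  rintro w ⟨hw, hn⟩
  obtain ⟨v, rfl⟩ : w ∈ Set.range (List.map ((↑) : s → α)) := by rwa [Set.range_list_map_coe]
  exact ⟨v, by simpa using hn, rfl⟩

end Sublist

section OrderIso

theorem wordOrdIso_iff_zip {s t : List ℕ} : WordOrdIso s t ↔ s.length = t.length ∧
    ∀ p ∈ s.zip t, ∀ q ∈ s.zip t, (p.1 < q.1 ↔ p.2 < q.2) := by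
  refine and_congr_right fun hl => ?_
  simp only [List.forall_mem_iff_forall_getElem, List.length_zip, List.getElem_zip, ← hl, min_self]
  refine ⟨fun h i hi j hj => ?_, fun h i j hi hj => ?_⟩
  · simpa [hi, hj, ← hl] using h i j hi hj
  · simpa [hi, hj, ← hl] using h i hi j hj

theorem WordOrdIso.refl (s : List ℕ) : WordOrdIso s s :=
  ⟨rfl, fun _ _ _ _ => Iff.rfl⟩

theorem WordOrdIso.symm {s t : List ℕ} (h : WordOrdIso s t) : WordOrdIso t s :=
  ⟨h.1.symm, fun i j hi hj => (h.2 i j (h.1 ▸ hi) (h.1 ▸ hj)).symm⟩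

theorem WordOrdIso.trans {s t u : List ℕ} (hst : WordOrdIso s t) (htu : WordOrdIso t u) :
    WordOrdIso s u :=
  ⟨hst.1.trans htu.1, fun i j hi hj =>
    (hst.2 i j hi hj).trans (htu.2 i j (hst.1 ▸ hi) (hst.1 ▸ hj))⟩

theorem wordOrdIso_map {p : List ℕ} {g : ℕ → ℕ} (hg : StrictMonoOn g {x | x ∈ p}) :
    WordOrdIso (p.map g) p := by
  refine ⟨List.length_map g, fun i j hi hj => ?_⟩
  rw [List.length_map] at hi hj
  simpa [hi, hj] using hg.lt_iff_lt (List.getElem_mem hi) (List.getElem_mem hj)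

theorem wordOrdIso_map_add (p : List ℕ) (k : ℕ) : WordOrdIso (p.map (· + k)) p :=
  wordOrdIso_map fun _ _ _ _ hxy => Nat.add_lt_add_right hxy k

theorem WordOrdIso.exists_map_eq {s p : List ℕ} (h : WordOrdIso s p) :
    ∃ g : ℕ → ℕ, StrictMonoOn g {x | x ∈ p} ∧ p.map g = s := by
  obtain ⟨hl, h⟩ := h
  have hidx : ∀ {x}, x ∈ p → p.idxOf x < s.length := fun hx =>
    hl ▸ List.idxOf_lt_length_of_mem hx
  have hget : ∀ {x}, x ∈ p → p.getD (p.idxOf x) 0 = x := fun hx => by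
    rw [List.getD_eq_getElem _ _ (List.idxOf_lt_length_of_mem hx), List.getElem_idxOf]
  refine ⟨fun x => s.getD (p.idxOf x) 0, fun x hx y hy hxy => ?_, ?_⟩
  · exact (h _ _ (hidx hx) (hidx hy)).2 (by rwa [hget hx, hget hy])
  · refine List.ext_getElem (by simp [hl]) fun i hi hi' => ?_
    have hip : i < p.length := hl ▸ hi'
    have hmem : p[i] ∈ p := List.getElem_mem hip
    have h₁ := h i _ hi' (hidx hmem)
    have h₂ := h _ i (hidx hmem) hi'
    rw [hget hmem, List.getD_eq_getElem p _ hip, List.getD_eq_getElem s _ hi'] at h₁ h₂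
    rw [List.getElem_map]
    omega

theorem PatContains.mono {w w' p : List ℕ} (hp : PatContains w p) (h : w <+ w') :
    PatContains w' p :=
  let ⟨s, hs, hiso⟩ := hp
  ⟨s, hs.trans h, hiso⟩

theorem PatContains.of_wordOrdIso {w p q : List ℕ} (h : PatContains w p) (hpq : WordOrdIso p q) :
    PatContains w q :=
  let ⟨s, hs, hiso⟩ := h
  ⟨s, hs, hiso.trans hpq⟩

theorem NonCrossing.mono {w w' : List ℕ} (hw' : NonCrossing w') (h : w <+ w') : NonCrossing w :=
  fun hw => hw' (hw.mono h)

theorem patContains_map_add {w p : List ℕ} (k : ℕ) :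
    PatContains (w.map (· + k)) p ↔ PatContains w p := by
  constructor
  · rintro ⟨_, hs, hiso⟩
    obtain ⟨s, hsw, rfl⟩ := List.sublist_map_iff.1 hs
    exact ⟨s, hsw, (wordOrdIso_map_add s k).symm.trans hiso⟩
  · rintro ⟨s, hs, hiso⟩
    exact ⟨_, hs.map _, (wordOrdIso_map_add s k).trans hiso⟩

theorem nonCrossing_map_add {w : List ℕ} (k : ℕ) :
    NonCrossing (w.map (· + k)) ↔ NonCrossing w :=
  not_congr (patContains_map_add k)

theorem nonCrossing_iff {w : List ℕ} : NonCrossing w ↔ ∀ a b, a < b → ¬ [a, b, a, b] <+ w := by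
  rw [NonCrossing, PatAvoids, not_iff_comm]
  push Not
  constructor
  · rintro ⟨a, b, hab, h⟩
    refine ⟨_, h, wordOrdIso_iff_zip.2 ⟨rfl, ?_⟩⟩
    simp [hab, hab.not_gt]
  · rintro ⟨s, hs, hiso⟩
    obtain ⟨g, hg, rfl⟩ := hiso.exists_map_eq
    exact ⟨g 1, g 2, hg (by simp) (by simp) one_lt_two, by simpa using hs⟩

end OrderIso

section NLetters

theorem nLetters_cons (x : ℕ) (w : List ℕ) : nLetters (x :: w) = max x (nLetters w) := rfl

theorem nLetters_append (u v : List ℕ) :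
    nLetters (u ++ v) = max (nLetters u) (nLetters v) := by
  induction u with
  | nil => exact (Nat.zero_max _).symm
  | cons x u ih => rw [List.cons_append, nLetters_cons, nLetters_cons, ih, max_assoc]

theorem le_nLetters {x : ℕ} {w : List ℕ} (hx : x ∈ w) : x ≤ nLetters w := by
  obtain ⟨u, v, rfl⟩ := List.append_of_mem hx
  rw [nLetters_append, nLetters_cons]
  omega

theorem nLetters_mem {w : List ℕ} (hw : w ≠ []) : nLetters w ∈ w := by
  induction w with
  | nil => exact absurd rfl hw
  | cons x w ih =>
    rw [nLetters_cons, List.mem_cons]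
    rcases eq_or_ne w [] with rfl | hw
    · exact Or.inl (Nat.max_zero x)
    · rcases max_choice x (nLetters w) with h | h <;> rw [h]
      · exact Or.inl rfl
      · exact Or.inr (ih hw)

theorem max_nLetters_map_add (w : List ℕ) (k : ℕ) :
    max k (nLetters (w.map (· + k))) = k + nLetters w := by
  induction w with
  | nil => exact Nat.max_zero k
  | cons x w ih => rw [List.map_cons, nLetters_cons, nLetters_cons]; omega

end NLetters

section Pat2

variable {σ τ w : List ℕ}

theorem exists_eq_of_wordOrdIso_pat2 (hσ : ∀ x ∈ σ, 1 ≤ x) (hτ : ∀ x ∈ τ, 1 ≤ x) {s : List ℕ}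
    (h : WordOrdIso s (pat2 σ τ)) :
    ∃ a x y, s = a :: (x ++ a :: y) ∧ WordOrdIso x σ ∧ WordOrdIso y τ ∧
      (∀ z ∈ x, a < z) ∧ (∀ z ∈ y, a < z) ∧ ∀ z ∈ x, ∀ z' ∈ y, z < z' := by
  obtain ⟨g, hg, rfl⟩ := h.exists_map_eq
  have h1 : 1 ∈ pat2 σ τ := List.mem_cons_self
  have hσmem : ∀ z ∈ σ, z + 1 ∈ pat2 σ τ := fun z hz => by simp [pat2, hz]
  have hτmem : ∀ z ∈ τ, z + (1 + nLetters σ) ∈ pat2 σ τ := fun z hz => by simp [pat2, hz]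
  refine ⟨g 1, (σ.map (· + 1)).map g, (τ.map (· + (1 + nLetters σ))).map g,
    by simp only [pat2, List.map_cons, List.map_append],
    (wordOrdIso_map (hg.mono ?_)).trans (wordOrdIso_map_add σ _),
    (wordOrdIso_map (hg.mono ?_)).trans (wordOrdIso_map_add τ _), ?_, ?_, ?_⟩
  · exact List.forall_mem_map.2 hσmem
  · exact List.forall_mem_map.2 hτmem
  · simp only [List.forall_mem_map]
    exact fun z hz => hg h1 (hσmem z hz) (Nat.lt_add_of_pos_left (hσ z hz))
  · simp only [List.forall_mem_map]
    exact fun z hz => hg h1 (hτmem z hz) (by have := hτ z hz; omega)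
  · simp only [List.forall_mem_map]
    exact fun z hz z' hz' => hg (hσmem z hz) (hτmem z' hz')
      (by have := le_nLetters hz; have := hτ z' hz'; omega)

theorem wordOrdIso_pat2 (hσ : ∀ x ∈ σ, 1 ≤ x) (hτ : ∀ x ∈ τ, 1 ≤ x) {a : ℕ} {x y : List ℕ}
    (hx : WordOrdIso x σ) (hy : WordOrdIso y τ) (hax : ∀ z ∈ x, a < z) (hay : ∀ z ∈ y, a < z)
    (hxy : ∀ z ∈ x, ∀ z' ∈ y, z < z') : WordOrdIso (a :: (x ++ a :: y)) (pat2 σ τ) := by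
  obtain ⟨hxl, hx⟩ := wordOrdIso_iff_zip.1 (hx.trans (wordOrdIso_map_add σ 1).symm)
  obtain ⟨hyl, hy⟩ :=
    wordOrdIso_iff_zip.1 (hy.trans (wordOrdIso_map_add τ (1 + nLetters σ)).symm)
  have hxmem : ∀ p ∈ x.zip (σ.map (· + 1)), p.1 ∈ x ∧ 1 < p.2 ∧ p.2 ≤ 1 + nLetters σ := by
    rintro ⟨z, t⟩ hp
    obtain ⟨hz, ht⟩ := List.of_mem_zip hp
    obtain ⟨t, htσ, rfl⟩ := List.mem_map.1 ht
    have := hσ t htσ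
    have := le_nLetters htσ
    exact ⟨hz, by grind⟩
  have hymem : ∀ p ∈ y.zip (τ.map (· + (1 + nLetters σ))), p.1 ∈ y ∧ 1 + nLetters σ < p.2 := by
    rintro ⟨z, t⟩ hp
    obtain ⟨hz, ht⟩ := List.of_mem_zip hp
    obtain ⟨t, htτ, rfl⟩ := List.mem_map.1 ht
    exact ⟨hz, by have := hτ t htτ; grind⟩
  refine wordOrdIso_iff_zip.2 ⟨by simp [pat2, hxl, hyl], ?_⟩
  rw [pat2, List.zip_cons_cons, List.zip_append hxl, List.zip_cons_cons]
  intro p hp q hq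
  simp only [List.mem_cons, List.mem_append] at hp hq
  grind

theorem patContains_pat2_iff (hσ : ∀ x ∈ σ, 1 ≤ x) (hτ : ∀ x ∈ τ, 1 ≤ x) :
    PatContains w (pat2 σ τ) ↔ ∃ a x y, a :: (x ++ a :: y) <+ w ∧ WordOrdIso x σ ∧
      WordOrdIso y τ ∧ (∀ z ∈ x, a < z) ∧ (∀ z ∈ y, a < z) ∧ ∀ z ∈ x, ∀ z' ∈ y, z < z' := by
  constructor
  · rintro ⟨s, hs, hiso⟩
    obtain ⟨a, x, y, rfl, h⟩ := exists_eq_of_wordOrdIso_pat2 hσ hτ hiso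
    exact ⟨a, x, y, hs, h⟩
  · rintro ⟨a, x, y, hs, hx, hy, hax, hay, hxy⟩
    exact ⟨_, hs, wordOrdIso_pat2 hσ hτ hx hy hax hay hxy⟩

theorem PatContains.of_pat2 (hσ : ∀ x ∈ σ, 1 ≤ x) (hτ : ∀ x ∈ τ, 1 ≤ x)
    (h : PatContains w (pat2 σ τ)) : PatContains w σ ∧ PatContains w τ := by
  obtain ⟨a, x, y, hs, hx, hy, -⟩ := (patContains_pat2_iff hσ hτ).1 h
  have hxy : x ++ a :: y <+ w := (List.sublist_cons_self ..).trans hs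
  exact ⟨⟨x, (List.sublist_append_left ..).trans hxy, hx⟩,
    ⟨y, (List.sublist_cons_self ..).trans ((List.sublist_append_right ..).trans hxy), hy⟩⟩

end Pat2

section RGF

/-- The suffixes of restricted growth functions: `IsRGFAfter m w` says that `w` may follow a prefix
with maximum letter `m`. In contrast to `IsRGF` it can be unfolded letter by letter. -/
def IsRGFAfter : ℕ → List ℕ → Prop
  | _, [] => True
  | m, x :: w => 1 ≤ x ∧ x ≤ m + 1 ∧ IsRGFAfter (max m x) w

variable {m : ℕ} {w : List ℕ}

theorem isRGFAfter_append {u v : List ℕ} :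
    IsRGFAfter m (u ++ v) ↔ IsRGFAfter m u ∧ IsRGFAfter (max m (nLetters u)) v := by
  induction u generalizing m with
  | nil => simp [IsRGFAfter, nLetters]
  | cons x u ih => simp only [List.cons_append, IsRGFAfter, ih, nLetters_cons, max_assoc, and_assoc]

theorem isRGFAfter_map_add (k : ℕ) (hw : ∀ x ∈ w, 1 ≤ x) :
    IsRGFAfter (m + k) (w.map (· + k)) ↔ IsRGFAfter m w := by
  induction w generalizing m with
  | nil => simp only [List.map_nil, IsRGFAfter]
  | cons x w ih =>
    obtain ⟨hx, hw⟩ := List.forall_mem_cons.1 hw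
    rw [List.map_cons, IsRGFAfter, IsRGFAfter, Nat.add_max_add_right, ih hw]
    refine and_congr (by omega) (and_congr_left' (by omega))

theorem IsRGFAfter.mem_of_lt_of_le (h : IsRGFAfter m w) {y : ℕ} (hm : m < y)
    (hy : y ≤ max m (nLetters w)) : y ∈ w := by
  induction w generalizing m with
  | nil => simp only [nLetters, List.foldr_nil] at hy; omega
  | cons x w ih =>
    obtain ⟨-, hx, h⟩ := h
    rw [nLetters_cons] at hy
    rcases eq_or_ne y x with rfl | hne
    · exact List.mem_cons_self
    · exact List.mem_cons_of_mem _ (ih h (by omega) (by omega))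

theorem IsRGFAfter.le_add_length (h : IsRGFAfter m w) : ∀ x ∈ w, x ≤ m + w.length := by
  induction w generalizing m with
  | nil => simp
  | cons y w ih =>
    obtain ⟨-, hy, h⟩ := h
    rw [List.length_cons, List.forall_mem_cons]
    exact ⟨by omega, fun x hx => by have := ih h x hx; omega⟩

theorem isRGFAfter_iff : IsRGFAfter m w ↔ (∀ x ∈ w, 1 ≤ x) ∧
    ∀ i < w.length, w.getD i 0 ≤ max m (nLetters (w.take i)) + 1 := by
  induction w generalizing m with
  | nil => simp [IsRGFAfter]
  | cons x w ih =>
    rw [IsRGFAfter, ih, List.forall_mem_cons, List.length_cons, Nat.forall_lt_succ_left']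
    simp only [List.getD_cons_succ, List.take_succ_cons, max_assoc,
      List.getD_cons_zero, List.take_zero, nLetters, List.foldr_nil, Nat.max_zero]
    tauto

theorem isRGF_iff_isRGFAfter_zero : IsRGF w ↔ IsRGFAfter 0 w := by
  rw [isRGFAfter_iff, IsRGF]
  refine and_congr_right fun hpos => ?_
  cases w with
  | nil => simp
  | cons x w =>
    rw [List.length_cons, Nat.forall_lt_succ_left']
    have hx : 1 ≤ x := hpos x List.mem_cons_self
    simp only [nLetters, List.getD_cons_zero, List.take_zero, List.foldr_nil, Nat.zero_max]
    refine and_congr ?_ (by simp)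
    rw [forall_prop_of_true (List.cons_ne_nil x w)]
    omega

theorem exists_map_add_eq {u : List ℕ} {k : ℕ} (hu : ∀ x ∈ u, k < x) :
    ∃ c : List ℕ, (∀ x ∈ c, 1 ≤ x) ∧ c.map (· + k) = u := by
  refine ⟨u.map (· - k), ?_, ?_⟩
  · exact List.forall_mem_map.2 fun x hx => Nat.sub_pos_of_lt (hu x hx)
  · rw [List.map_map]
    exact (List.map_congr_left fun x hx => Nat.sub_add_cancel (hu x hx).le).trans (List.map_id u)

/-- A word that is not the concatenation of two nonempty words, the letters of the first all
smaller than those of the second. For restricted growth functions this means being empty or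
connected. -/
def SumIndecomposable (w : List ℕ) : Prop :=
  ∀ u v, w = u ++ v → (∀ x ∈ u, ∀ y ∈ v, x < y) → u = [] ∨ v = []

theorem SumIndecomposable.of_wordOrdIso {s p : List ℕ} (hp : SumIndecomposable p)
    (h : WordOrdIso s p) : SumIndecomposable s := by
  rintro u v rfl huv
  obtain ⟨g, hg, hgs⟩ := h.exists_map_eq
  obtain ⟨u, v, rfl, rfl, rfl⟩ := List.map_eq_append_iff.1 hgs
  simp only [List.map_eq_nil_iff]
  refine hp u v rfl fun x hx y hy => (hg.lt_iff_lt ?_ ?_).1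
    (huv _ (List.mem_map_of_mem hx) _ (List.mem_map_of_mem hy))
  · exact List.mem_append_left _ hx
  · exact List.mem_append_right _ hy

theorem IsRGF.sumIndecomposable (hw : IsRGF w) (hc : w = [] ∨ Connected w) :
    SumIndecomposable w := by
  rintro u v rfl huv
  by_contra! ⟨hu, hv⟩
  obtain ⟨v, hvpos, rfl⟩ := exists_map_add_eq (huv _ (nLetters_mem hu))
  rw [isRGF_iff_isRGFAfter_zero, isRGFAfter_append, Nat.zero_max] at hw
  have hvRGF := (isRGFAfter_map_add (m := 0) (nLetters u) hvpos).1 (by simpa using hw.2)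
  have hconn := hc.resolve_left (List.append_ne_nil_of_left_ne_nil hu _)
  exact hconn.2 ⟨u, v, isRGF_iff_isRGFAfter_zero.2 hw.1, isRGF_iff_isRGFAfter_zero.2 hvRGF, hu,
    by simpa using hv, rfl⟩

theorem finite_setOf_isRGF_and_length_eq (n : ℕ) : {w | IsRGF w ∧ w.length = n}.Finite := by
  refine (finite_setOf_forall_mem_and_length_eq (Set.finite_Iic n) n).subset ?_
  rintro w ⟨hw, rfl⟩
  exact ⟨by simpa using (isRGF_iff_isRGFAfter_zero.1 hw).le_add_length, rfl⟩

end RGF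

section OnesJoin

/-- The word `1[c₁]1[c₂]⋯1[c_k]` for `l = [c₁, …, c_k]` and `s = 1`. In general `s` is the shift
applied to the first block, that is, the number of distinct letters read so far. -/
def onesJoin : ℕ → List (List ℕ) → List ℕ
  | _, [] => []
  | s, c :: l => 1 :: (c.map (· + s) ++ onesJoin (s + nLetters c) l)

variable {s : ℕ} {c : List ℕ} {l : List (List ℕ)}

theorem length_onesJoin : (onesJoin s l).length = (l.map (·.length + 1)).sum := by
  induction l generalizing s with
  | nil => rfl
  | cons c l ih =>
    simp only [onesJoin, List.length_cons, List.length_append, List.length_map, List.map_cons,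
      List.sum_cons, ih]
    omega

theorem one_notMem_map_add (hs : 1 ≤ s) (hc : ∀ x ∈ c, 1 ≤ x) : 1 ∉ c.map (· + s) := by
  intro h
  obtain ⟨x, hx, hxs⟩ := List.mem_map.1 h
  have := hc x hx
  omega

theorem eq_one_or_lt_of_mem_onesJoin (hl : ∀ c ∈ l, ∀ x ∈ c, 1 ≤ x) {x : ℕ}
    (hx : x ∈ onesJoin s l) : x = 1 ∨ s < x := by
  induction l generalizing s with
  | nil => exact absurd hx List.not_mem_nil
  | cons c l ih =>
    obtain ⟨hc, hl⟩ := List.forall_mem_cons.1 hl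
    rw [onesJoin, List.mem_cons, List.mem_append, List.mem_map] at hx
    rcases hx with rfl | ⟨x, hx, rfl⟩ | hx
    · exact Or.inl rfl
    · exact Or.inr (Nat.lt_add_of_pos_left (hc x hx))
    · exact (ih hl hx).imp_right (Nat.lt_of_le_of_lt (Nat.le_add_right ..))

theorem lt_of_mem_map_add_of_mem_onesJoin (hl : ∀ c ∈ l, ∀ x ∈ c, 1 ≤ x) {x y : ℕ}
    (hx : x ∈ c.map (· + s)) (hy : y ∈ onesJoin (s + nLetters c) l) (hy1 : y ≠ 1) : x < y := by
  obtain ⟨x, hxc, rfl⟩ := List.mem_map.1 hx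
  have := le_nLetters hxc
  have := (eq_one_or_lt_of_mem_onesJoin hl hy).resolve_left hy1
  omega

theorem one_cons_cons_sublist_onesJoin {z : ℕ} {t : List ℕ} (hz : z ≠ 1)
    (h : z :: t <+ onesJoin s l) : 1 :: z :: t <+ onesJoin s l := by
  cases l with
  | nil => exact absurd (List.sublist_nil.1 h) (List.cons_ne_nil z t)
  | cons c l => exact (h.of_cons_of_ne hz).cons_cons 1

theorem isRGFAfter_onesJoin {m : ℕ} (hm : max m 1 = s) (hl : ∀ c ∈ l, IsRGF c) :
    IsRGFAfter m (onesJoin s l) := by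
  induction l generalizing m s with
  | nil => trivial
  | cons c l ih =>
    obtain ⟨hc, hl⟩ := List.forall_mem_cons.1 hl
    have hcs := (isRGFAfter_map_add s hc.1).2 (isRGF_iff_isRGFAfter_zero.1 hc)
    refine ⟨le_rfl, Nat.le_add_left .., ?_⟩
    rw [hm, isRGFAfter_append, max_nLetters_map_add]
    exact ⟨by simpa only [Nat.zero_add] using hcs, ih (by omega) hl⟩

theorem isRGF_onesJoin_one (hl : ∀ c ∈ l, IsRGF c) : IsRGF (onesJoin 1 l) :=
  isRGF_iff_isRGFAfter_zero.2 (isRGFAfter_onesJoin rfl hl)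

theorem nonCrossing_onesJoin (hs : 1 ≤ s) (hl : ∀ c ∈ l, ∀ x ∈ c, 1 ≤ x)
    (hlnc : ∀ c ∈ l, NonCrossing c) : NonCrossing (onesJoin s l) := by
  rw [nonCrossing_iff]
  induction l generalizing s with
  | nil => exact fun a b _ h => List.cons_ne_nil _ _ (List.sublist_nil.1 h)
  | cons c l ih =>
    obtain ⟨hc, hl'⟩ := List.forall_mem_cons.1 hl
    obtain ⟨hcnc, hlnc⟩ := List.forall_mem_cons.1 hlnc
    have h1c := one_notMem_map_add hs hc
    intro a b hab h
    have ha : 1 ≤ a := by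
      rcases eq_one_or_lt_of_mem_onesJoin hl (h.subset List.mem_cons_self) with h | h <;> omega
    have hb : b ≠ 1 := by omega
    rw [onesJoin, ← List.cons_append] at h
    by_cases hbc : b ∈ c.map (· + s)
    · have hbl : b ∉ onesJoin (s + nLetters c) l := fun hbl =>
        (lt_of_mem_map_add_of_mem_onesJoin hl' hbc hbl hb).false
      obtain ⟨_, _, -, h, -⟩ :=
        exists_append_of_append_cons_sublist_append' (x := [a, b, a]) (y := []) h hbl
      rcases eq_or_ne a 1 with rfl | ha1
      · exact h1c ((List.cons_sublist_cons.1 h).subset (by simp))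
      · exact nonCrossing_iff.1 ((nonCrossing_map_add s).2 hcnc) a b hab
          ((List.sublist_append_left ..).trans (h.of_cons_of_ne ha1))
    · obtain ⟨_, x₂, -, -, h'⟩ := exists_append_of_append_cons_sublist_append (x := [a]) h
        (List.not_mem_cons_of_ne_of_not_mem hb hbc)
      have hbab : [b, a, b] <+ onesJoin (s + nLetters c) l :=
        (List.sublist_append_right ..).trans h'
      refine ih (s := s + nLetters c) (by omega) hl' hlnc a b hab ?_
      rcases eq_or_ne a 1 with rfl | ha1
      · exact one_cons_cons_sublist_onesJoin hb hbab
      · exact cons_sublist_of_cons_sublist_append h (List.not_mem_cons_of_ne_of_not_mem ha1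
          fun hac => (lt_of_mem_map_add_of_mem_onesJoin hl' hac (hbab.subset (by simp)) ha1).false)

theorem takeWhile_map_add_append_onesJoin (hs : 1 ≤ s) (hc : ∀ x ∈ c, 1 ≤ x) {k : ℕ} :
    (c.map (· + s) ++ onesJoin k l).takeWhile (· ≠ 1) = c.map (· + s) := by
  rw [List.takeWhile_append_of_pos]
  · cases l <;> simp [onesJoin]
  · exact fun x hx => decide_eq_true (ne_of_mem_of_not_mem hx (one_notMem_map_add hs hc))

theorem onesJoin_injOn (hs : 1 ≤ s) : Set.InjOn (onesJoin s) {l | ∀ c ∈ l, ∀ x ∈ c, 1 ≤ x} := by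
  intro l hl l' hl' h
  induction l generalizing s l' with
  | nil => cases l' with
    | nil => rfl
    | cons c' l' => exact absurd h (List.cons_ne_nil _ _).symm
  | cons c l ih => cases l' with
    | nil => exact absurd h (List.cons_ne_nil _ _)
    | cons c' l' =>
      obtain ⟨hc, htl⟩ := List.forall_mem_cons.1 hl
      obtain ⟨hc', htl'⟩ := List.forall_mem_cons.1 hl'
      have htail := List.tail_eq_of_cons_eq h
      have hcc' : c.map (· + s) = c'.map (· + s) := by
        rw [← takeWhile_map_add_append_onesJoin hs hc, htail,
          takeWhile_map_add_append_onesJoin hs hc']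
      obtain rfl := List.map_injective_iff.2 (add_left_injective s) hcc'
      exact congrArg (c :: ·) (ih (by omega) htl htl' (List.append_cancel_left htail))

theorem exists_onesJoin_eq_one_cons (hs : 1 ≤ s) {t : List ℕ} (ht : IsRGFAfter s t)
    (hnc : NonCrossing (1 :: t)) (hst : ∀ x ∈ t, x ≠ 1 → s < x) :
    ∃ l, (∀ c ∈ l, IsRGF c ∧ NonCrossing c) ∧ onesJoin s l = 1 :: t := by
  induction hn : t.length using Nat.strong_induction_on generalizing s t with
  | _ n ih =>
  have exists_block : ∀ u, IsRGFAfter s u → u <+ t → 1 ∉ u →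
      ∃ c, (IsRGF c ∧ NonCrossing c) ∧ c.map (· + s) = u := by
    intro u hu hut h1u
    obtain ⟨c, hc, rfl⟩ := exists_map_add_eq
      fun x hx => hst x (hut.subset hx) (ne_of_mem_of_not_mem hx h1u)
    have hu' := (isRGFAfter_map_add (m := 0) s hc).1 (by rwa [Nat.zero_add])
    exact ⟨c, ⟨isRGF_iff_isRGFAfter_zero.2 hu',
      (nonCrossing_map_add s).1 (hnc.mono (hut.cons 1))⟩, rfl⟩
  by_cases h1t : 1 ∈ t
  · obtain ⟨u, r, rfl, h1u⟩ := List.eq_append_cons_of_mem h1t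
    rw [isRGFAfter_append] at ht
    obtain ⟨hu, -, -, hr⟩ := ht
    obtain ⟨c, hc, rfl⟩ := exists_block u hu (List.sublist_append_left ..) h1u
    rw [max_nLetters_map_add, max_eq_left (by omega)] at hr
    have hcr : ∀ x ∈ r, x ≠ 1 → s + nLetters c < x := by
      by_contra! ⟨x, hxr, hx1, hx⟩
      have hsx : s < x := hst x (by simp [hxr]) hx1
      have hxc := hu.mem_of_lt_of_le hsx (by rwa [max_nLetters_map_add])
      exact nonCrossing_iff.1 hnc 1 x (by omega) (((List.singleton_sublist.2 hxc).append
        ((List.singleton_sublist.2 hxr).cons_cons 1)).cons_cons 1)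
    obtain ⟨l, hl, hlr⟩ := ih r.length (by simp [← hn]; omega) (by omega) hr
      (hnc.mono ((List.sublist_append_right ..).cons 1)) hcr rfl
    exact ⟨c :: l, List.forall_mem_cons.2 ⟨hc, hl⟩, by rw [onesJoin, hlr]⟩
  · obtain ⟨c, hc, rfl⟩ := exists_block t ht (List.Sublist.refl t) h1t
    exact ⟨[c], List.forall_mem_singleton.2 hc, by simp [onesJoin]⟩

theorem exists_onesJoin_one_eq {w : List ℕ} (hw : IsRGF w) (hnc : NonCrossing w) :
    ∃ l, (∀ c ∈ l, IsRGF c ∧ NonCrossing c) ∧ onesJoin 1 l = w := by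
  cases w with
  | nil => exact ⟨[], by simp, rfl⟩
  | cons x t =>
    have hpos := hw.1
    obtain ⟨hx, hx', ht⟩ := isRGF_iff_isRGFAfter_zero.1 hw
    obtain rfl : x = 1 := by omega
    exact exists_onesJoin_eq_one_cons le_rfl ht hnc fun y hy hy1 =>
      (hpos y (List.mem_cons_of_mem _ hy)).lt_of_ne' hy1

end OnesJoin

section Containment

variable {s : ℕ} {l : List (List ℕ)} {x y σ τ : List ℕ}

theorem SumIndecomposable.eq_nil_or_eq_nil_of_sublist {c u v : List ℕ}
    (huv : SumIndecomposable (u ++ v)) (hl : ∀ c ∈ l, ∀ x ∈ c, 1 ≤ x) (h1 : 1 ∉ u ++ v)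
    (hu : u <+ c.map (· + s)) (hv : v <+ onesJoin (s + nLetters c) l) : u = [] ∨ v = [] :=
  huv u v rfl fun _ hz _ hz' => lt_of_mem_map_add_of_mem_onesJoin hl (hu.subset hz) (hv.subset hz')
    (ne_of_mem_of_not_mem (List.mem_append_right u hz') h1)

theorem exists_patContains_of_one_cons_sublist_onesJoin (hs : 1 ≤ s)
    (hl : ∀ c ∈ l, ∀ x ∈ c, 1 ≤ x) (hx : SumIndecomposable x) (hx1 : 1 ∉ x)
    (h : 1 :: x <+ onesJoin s l) : ∃ c ∈ l, PatContains c x := by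
  induction l generalizing s with
  | nil => exact absurd (List.sublist_nil.1 h) (List.cons_ne_nil 1 x)
  | cons c l ih =>
    have hl' := (List.forall_mem_cons.1 hl).2
    rcases List.sublist_append_iff.1 (List.cons_sublist_cons.1 h) with ⟨u, v, rfl, hu, hv⟩
    have hc : v = [] → PatContains c (u ++ v) := by
      rintro rfl
      exact (patContains_map_add s).1 ⟨u, hu, by rw [List.append_nil]; exact .refl u⟩
    rcases hx.eq_nil_or_eq_nil_of_sublist hl' hx1 hu hv with rfl | hv0
    · cases v with
      | nil => exact ⟨c, List.mem_cons_self, hc rfl⟩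
      | cons z t =>
        have hz : z ≠ 1 := ne_of_mem_of_not_mem List.mem_cons_self hx1
        obtain ⟨d, hd, hdx⟩ := ih (by omega) hl' (one_cons_cons_sublist_onesJoin hz hv)
        exact ⟨d, List.mem_cons_of_mem c hd, hdx⟩
    · exact ⟨c, List.mem_cons_self, hc hv0⟩

theorem exists_pair_of_one_cons_append_one_cons_sublist_onesJoin (hs : 1 ≤ s)
    (hl : ∀ c ∈ l, ∀ x ∈ c, 1 ≤ x) (hx : SumIndecomposable x) (hy : SumIndecomposable y)
    (hx1 : 1 ∉ x) (hy1 : 1 ∉ y) (h : 1 :: (x ++ 1 :: y) <+ onesJoin s l) :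
    ∃ c d, [c, d] <+ l ∧ PatContains c x ∧ PatContains d y := by
  induction l generalizing s with
  | nil => exact absurd (List.sublist_nil.1 h) (List.cons_ne_nil _ _)
  | cons c l ih =>
    obtain ⟨hc, hl'⟩ := List.forall_mem_cons.1 hl
    obtain ⟨u, v, rfl, hu, hv⟩ := exists_append_of_append_cons_sublist_append
      (List.cons_sublist_cons.1 h) (one_notMem_map_add hs hc)
    have huv := hx.eq_nil_or_eq_nil_of_sublist hl' hx1 hu ((List.sublist_append_left ..).trans hv)
    cases v with
    | nil =>
      obtain ⟨d, hd, hdy⟩ :=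
        exists_patContains_of_one_cons_sublist_onesJoin (by omega) hl' hy hy1 hv
      rw [List.append_nil]
      exact ⟨c, d, (List.singleton_sublist.2 hd).cons_cons c,
        (patContains_map_add s).1 ⟨u, hu, .refl u⟩, hdy⟩
    | cons z t =>
      obtain rfl := huv.resolve_right (List.cons_ne_nil z t)
      have hz : z ≠ 1 := ne_of_mem_of_not_mem List.mem_cons_self hx1
      obtain ⟨d, e, hde, hd, he⟩ := ih (by omega) hl' (one_cons_cons_sublist_onesJoin hz hv)
      exact ⟨d, e, hde.cons c, hd, he⟩

theorem patContains_or_exists_pair_of_cons_append_cons_sublist_onesJoin (hs : 1 ≤ s)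
    (hl : ∀ c ∈ l, ∀ x ∈ c, 1 ≤ x) {a : ℕ} (ha : a ≠ 1) (hy : SumIndecomposable y)
    (hy1 : 1 ∉ y) (h : a :: (x ++ a :: y) <+ onesJoin s l) :
    (∃ c ∈ l, PatContains c (a :: (x ++ a :: y))) ∨
      ∃ c d, [c, d] <+ l ∧ PatContains c x ∧ PatContains d y := by
  induction l generalizing s with
  | nil => exact absurd (List.sublist_nil.1 h) (List.cons_ne_nil _ _)
  | cons c l ih =>
    obtain ⟨hc, hl'⟩ := List.forall_mem_cons.1 hl
    rw [onesJoin, List.sublist_cons_iff, or_iff_left (by simp [ha])] at h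
    by_cases hac : a ∈ c.map (· + s)
    · have hal : a ∉ onesJoin (s + nLetters c) l := fun hal =>
        (lt_of_mem_map_add_of_mem_onesJoin hl' hac hal ha).false
      obtain ⟨u, v, rfl, hu, hv⟩ :=
        exists_append_of_append_cons_sublist_append' (x := a :: x) h hal
      have huc : u <+ c.map (· + s) :=
        ((List.sublist_cons_self ..).trans (List.sublist_append_right ..)).trans hu
      have huv := hy.eq_nil_or_eq_nil_of_sublist hl' hy1 huc hv
      cases v with
      | nil =>
        rw [List.append_nil]
        exact Or.inl ⟨c, List.mem_cons_self, (patContains_map_add s).1 ⟨_, hu, .refl _⟩⟩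
      | cons z t =>
        obtain rfl := huv.resolve_right (List.cons_ne_nil z t)
        have hz : z ≠ 1 := ne_of_mem_of_not_mem List.mem_cons_self hy1
        obtain ⟨d, hd, hdy⟩ := exists_patContains_of_one_cons_sublist_onesJoin (by omega) hl' hy
          hy1 (one_cons_cons_sublist_onesJoin hz hv)
        have hxc : x <+ c.map (· + s) :=
          ((List.sublist_append_left ..).trans (List.sublist_cons_self ..)).trans hu
        exact Or.inr ⟨c, d, (List.singleton_sublist.2 hd).cons_cons c,
          (patContains_map_add s).1 ⟨x, hxc, .refl x⟩, hdy⟩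
    · rcases ih (by omega) hl' (cons_sublist_of_cons_sublist_append h hac) with
        ⟨d, hd, hda⟩ | ⟨d, e, hde, hd, he⟩
      · exact Or.inl ⟨d, List.mem_cons_of_mem c hd, hda⟩
      · exact Or.inr ⟨d, e, hde.cons c, hd, he⟩

theorem exists_one_cons_map_add_sublist_onesJoin {c : List ℕ} (hc : c ∈ l) :
    ∃ k, s ≤ k ∧ 1 :: c.map (· + k) <+ onesJoin s l := by
  induction l generalizing s with
  | nil => exact absurd hc List.not_mem_nil
  | cons d l ih =>
    rcases List.mem_cons.1 hc with rfl | hc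
    · exact ⟨s, le_rfl, (List.sublist_append_left ..).cons_cons 1⟩
    · obtain ⟨k, hk, h⟩ := ih (s := s + nLetters d) hc
      exact ⟨k, by omega, (h.trans (List.sublist_append_right ..)).cons 1⟩

theorem exists_one_cons_map_add_append_sublist_onesJoin {c d : List ℕ} (hcd : [c, d] <+ l) :
    ∃ j k, s ≤ j ∧ j + nLetters c ≤ k ∧
      1 :: (c.map (· + j) ++ 1 :: d.map (· + k)) <+ onesJoin s l := by
  induction l generalizing s with
  | nil => exact absurd (List.sublist_nil.1 hcd) (List.cons_ne_nil _ _)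
  | cons e l ih =>
    rcases List.cons_sublist_cons'.1 hcd with hcd | ⟨rfl, hd⟩
    · obtain ⟨j, k, hj, hk, h⟩ := ih (s := s + nLetters e) hcd
      exact ⟨j, k, by omega, hk, (h.trans (List.sublist_append_right ..)).cons 1⟩
    · obtain ⟨k, hk, h⟩ := exists_one_cons_map_add_sublist_onesJoin (s := s + nLetters c)
        (List.singleton_sublist.1 hd)
      exact ⟨s, k, le_rfl, hk, ((List.Sublist.refl _).append h).cons_cons 1⟩

theorem patContains_onesJoin_pat2_of_pair_sublist (hs : 1 ≤ s) (hl : ∀ c ∈ l, ∀ x ∈ c, 1 ≤ x)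
    (hσ : ∀ x ∈ σ, 1 ≤ x) (hτ : ∀ x ∈ τ, 1 ≤ x) {c d : List ℕ} (hcd : [c, d] <+ l)
    (hc : PatContains c σ) (hd : PatContains d τ) : PatContains (onesJoin s l) (pat2 σ τ) := by
  obtain ⟨x, hxc, hx⟩ := hc
  obtain ⟨y, hyd, hy⟩ := hd
  obtain ⟨j, k, hj, hjk, h⟩ := exists_one_cons_map_add_append_sublist_onesJoin (s := s) hcd
  have hxpos := fun z hz => hl c (hcd.subset (by simp)) z (hxc.subset hz)
  have hypos := fun z hz => hl d (hcd.subset (by simp)) z (hyd.subset hz)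
  refine (patContains_pat2_iff hσ hτ).2 ⟨1, x.map (· + j), y.map (· + k),
    (((hxc.map _).append ((hyd.map _).cons_cons 1)).cons_cons 1).trans h,
    (wordOrdIso_map_add x j).trans hx, (wordOrdIso_map_add y k).trans hy, ?_, ?_, ?_⟩
  all_goals simp only [List.forall_mem_map]
  · exact fun z hz => by have := hxpos z hz; omega
  · exact fun z hz => by have := hypos z hz; omega
  · intro z hz z' hz'
    have := le_nLetters (hxc.subset hz)
    have := hypos z' hz'
    omega

theorem patContains_onesJoin_pat2_iff (hs : 1 ≤ s) (hl : ∀ c ∈ l, ∀ x ∈ c, 1 ≤ x)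
    (hσ : ∀ x ∈ σ, 1 ≤ x) (hσi : SumIndecomposable σ) (hτ : ∀ x ∈ τ, 1 ≤ x)
    (hτi : SumIndecomposable τ) : PatContains (onesJoin s l) (pat2 σ τ) ↔
      (∃ c ∈ l, PatContains c (pat2 σ τ)) ∨
        ∃ c d, [c, d] <+ l ∧ PatContains c σ ∧ PatContains d τ := by
  constructor
  · intro h
    obtain ⟨a, x, y, h, hx, hy, hax, hay, hxy⟩ := (patContains_pat2_iff hσ hτ).1 h
    have ha : 1 ≤ a := by
      rcases eq_one_or_lt_of_mem_onesJoin hl (h.subset List.mem_cons_self) with h | h <;> omega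
    have hx1 : 1 ∉ x := fun h1 => (hax 1 h1).not_ge ha
    have hy1 : 1 ∉ y := fun h1 => (hay 1 h1).not_ge ha
    have hxi := hσi.of_wordOrdIso hx
    have hyi := hτi.of_wordOrdIso hy
    rcases eq_or_ne a 1 with rfl | ha1
    · obtain ⟨c, d, hcd, hc, hd⟩ :=
        exists_pair_of_one_cons_append_one_cons_sublist_onesJoin hs hl hxi hyi hx1 hy1 h
      exact Or.inr ⟨c, d, hcd, hc.of_wordOrdIso hx, hd.of_wordOrdIso hy⟩
    · rcases patContains_or_exists_pair_of_cons_append_cons_sublist_onesJoin hs hl ha1 hyi hy1 h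
        with ⟨c, hcl, hc⟩ | ⟨c, d, hcd, hc, hd⟩
      · exact Or.inl ⟨c, hcl, hc.of_wordOrdIso (wordOrdIso_pat2 hσ hτ hx hy hax hay hxy)⟩
      · exact Or.inr ⟨c, d, hcd, hc.of_wordOrdIso hx, hd.of_wordOrdIso hy⟩
  · rintro (⟨c, hcl, hc⟩ | ⟨c, d, hcd, hc, hd⟩)
    · obtain ⟨k, -, hk⟩ := exists_one_cons_map_add_sublist_onesJoin (s := s) hcl
      exact ((patContains_map_add k).2 hc).mono ((List.sublist_cons_self ..).trans hk)
    · exact patContains_onesJoin_pat2_of_pair_sublist hs hl hσ hτ hcd hc hd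

end Containment

section Fibers

theorem reverse_map_reverse_map_of_forall_mem {α β : Type*} {f : α → β} {g : β → α} {l : List α}
    (h : ∀ a ∈ l, g (f a) = a) : (((l.map f).reverse).map g).reverse = l := by
  rw [List.map_reverse, List.reverse_reverse, List.map_map]
  exact (List.map_congr_left h).trans (List.map_id l)

theorem exists_bijOn_of_ncard_fiber_eq {α β κ : Type*} [Nonempty β] {A : Set α} {B : Set β}
    {p : α → κ} {q : β → κ} (hA : ∀ k, (A ∩ p ⁻¹' {k}).Finite) (hB : ∀ k, (B ∩ q ⁻¹' {k}).Finite)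
    (h : ∀ k, (A ∩ p ⁻¹' {k}).ncard = (B ∩ q ⁻¹' {k}).ncard) :
    ∃ f : α → β, Set.BijOn f A B ∧ ∀ a ∈ A, q (f a) = p a := by
  have hex : ∀ k, ∃ f : α → β, Set.BijOn f (A ∩ p ⁻¹' {k}) (B ∩ q ⁻¹' {k}) := fun k =>
    (hA k).exists_bijOn_of_encard_eq (by rw [← (hA k).cast_ncard_eq, h k, (hB k).cast_ncard_eq])
  choose F hF using hex
  have hFp : ∀ a ∈ A, F (p a) a ∈ B ∩ q ⁻¹' {p a} := fun a ha => (hF _).mapsTo ⟨ha, rfl⟩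
  refine ⟨fun a => F (p a) a, ⟨fun a ha => (hFp a ha).1, fun a ha b hb hab => ?_, fun b hb => ?_⟩,
    fun a ha => (hFp a ha).2⟩
  · have hpab : p a = p b := by
      rw [← (hFp a ha).2, ← (hFp b hb).2]
      exact congrArg q hab
    refine (hF (p b)).injOn ⟨ha, hpab⟩ ⟨hb, rfl⟩ ?_
    simpa only [hpab] using hab
  · obtain ⟨a, ⟨ha, hab⟩, hFb⟩ := (hF (q b)).surjOn ⟨hb, rfl⟩
    exact ⟨a, ha, (congrArg (F · a) hab).trans hFb⟩

theorem ncard_inter_eq_of_ncard_eq_of_sdiff_eq {α : Type*} {A B D : Set α} (hA : A.Finite)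
    (hB : B.Finite) (h : A.ncard = B.ncard) (hD : A \ D = B \ D) :
    (A ∩ D).ncard = (B ∩ D).ncard := by
  have hAD := Set.ncard_inter_add_ncard_sdiff_eq_ncard A D hA
  have hBD := Set.ncard_inter_add_ncard_sdiff_eq_ncard B D hB
  rw [hD] at hAD
  omega

end Fibers

section Counting

/-- The set of non-crossing restricted growth functions avoiding the pattern `p`. -/
def ncAvoiders (p : List ℕ) : Set (List ℕ) := {w | IsRGF w ∧ NonCrossing w ∧ PatAvoids w p}

/-- The words of `ncAvoiders p` of length less than `n`. They are the possible blocks of a word of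
length `n`. -/
def ncAvoidersBelow (p : List ℕ) (n : ℕ) : Set (List ℕ) := {w | w ∈ ncAvoiders p ∧ w.length < n}

/-- The lists `[c₁, …, c_k]` for which `1[c₁]⋯1[c_k]` is a non-crossing restricted growth function
of length `n` avoiding `1[σ]1[τ]`. -/
def blockLists (σ τ : List ℕ) (n : ℕ) : Set (List (List ℕ)) :=
  {l | (∀ c ∈ l, c ∈ ncAvoiders (pat2 σ τ)) ∧
    l.Pairwise (fun c d => ¬(PatContains c σ ∧ PatContains d τ)) ∧
    (l.map (·.length + 1)).sum = n}

/-- The data of a block that the bijection between blocks has to preserve: its length, and which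
of the patterns `σ` and `τ` it contains. -/
def blockType (σ τ w : List ℕ) : ℕ × Prop × Prop := (w.length, PatContains w σ, PatContains w τ)

variable {σ τ : List ℕ} {n : ℕ}

theorem blockType_eq_comm {v w : List ℕ} :
    blockType σ τ v = blockType σ τ w ↔ blockType τ σ v = blockType τ σ w := by
  simp only [blockType, Prod.mk.injEq]
  tauto

theorem finite_setOf_mem_ncAvoiders_and_length_eq (p : List ℕ) (m : ℕ) :
    {w | w ∈ ncAvoiders p ∧ w.length = m}.Finite :=
  (finite_setOf_isRGF_and_length_eq m).subset fun _ hw => ⟨hw.1.1, hw.2⟩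

theorem ncAvoidCount_eq_ncard (p : List ℕ) :
    ncAvoidCount n p = {w | w ∈ ncAvoiders p ∧ w.length = n}.ncard := by
  rw [ncAvoidCount]
  congr 1 with w
  simp only [ncAvoiders, Set.mem_ofPred_eq]
  tauto

theorem mem_ncAvoidersBelow_of_mem_blockLists {l : List (List ℕ)} (hl : l ∈ blockLists σ τ n)
    {c : List ℕ} (hc : c ∈ l) : c ∈ ncAvoidersBelow (pat2 σ τ) n :=
  ⟨hl.1 c hc, hl.2.2 ▸ List.le_sum_of_mem (List.mem_map_of_mem (f := (·.length + 1)) hc)⟩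

theorem onesJoin_one_mem_ncAvoiders_iff (hσ : ∀ x ∈ σ, 1 ≤ x) (hσi : SumIndecomposable σ)
    (hτ : ∀ x ∈ τ, 1 ≤ x) (hτi : SumIndecomposable τ) {l : List (List ℕ)}
    (hl : ∀ c ∈ l, IsRGF c ∧ NonCrossing c) :
    onesJoin 1 l ∈ ncAvoiders (pat2 σ τ) ∧ (onesJoin 1 l).length = n ↔ l ∈ blockLists σ τ n := by
  have hpos : ∀ c ∈ l, ∀ x ∈ c, 1 ≤ x := fun c hc => (hl c hc).1.1
  have hRGF := isRGF_onesJoin_one fun c hc => (hl c hc).1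
  have hnc := nonCrossing_onesJoin le_rfl hpos fun c hc => (hl c hc).2
  have hav : (∀ c ∈ l, c ∈ ncAvoiders (pat2 σ τ)) ↔ ∀ c ∈ l, PatAvoids c (pat2 σ τ) :=
    forall₂_congr fun c hc =>
      ⟨fun h => h.2.2, fun h => ⟨(hl c hc).1, (hl c hc).2, h⟩⟩
  simp only [ncAvoiders, blockLists, Set.mem_ofPred_eq] at hav ⊢
  rw [hav, length_onesJoin, PatAvoids, patContains_onesJoin_pat2_iff le_rfl hpos hσ hσi hτ hτi,
    List.pairwise_iff_forall_sublist]
  simp only [PatAvoids]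
  grind

theorem bijOn_onesJoin_one (hσ : ∀ x ∈ σ, 1 ≤ x) (hσi : SumIndecomposable σ)
    (hτ : ∀ x ∈ τ, 1 ≤ x) (hτi : SumIndecomposable τ) :
    Set.BijOn (onesJoin 1) (blockLists σ τ n)
      {w | w ∈ ncAvoiders (pat2 σ τ) ∧ w.length = n} := by
  refine ⟨fun l hl => ?_, ?_, fun w hw => ?_⟩
  · exact (onesJoin_one_mem_ncAvoiders_iff hσ hσi hτ hτi
      fun c hc => ⟨(hl.1 c hc).1, (hl.1 c hc).2.1⟩).2 hl
  · exact (onesJoin_injOn le_rfl).mono fun l hl c hc => (hl.1 c hc).1.1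
  · obtain ⟨l, hl, rfl⟩ := exists_onesJoin_one_eq hw.1.1 hw.1.2.1
    exact ⟨l, (onesJoin_one_mem_ncAvoiders_iff hσ hσi hτ hτi hl).1 hw, rfl⟩

theorem ncAvoidCount_pat2_eq_ncard_blockLists (hσ : ∀ x ∈ σ, 1 ≤ x) (hσi : SumIndecomposable σ)
    (hτ : ∀ x ∈ τ, 1 ≤ x) (hτi : SumIndecomposable τ) :
    ncAvoidCount n (pat2 σ τ) = (blockLists σ τ n).ncard :=
  (ncAvoidCount_eq_ncard _).trans (bijOn_onesJoin_one hσ hσi hτ hτi).ncard_eq.symm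

theorem ncard_fiber_blockType_eq (hσ : ∀ x ∈ σ, 1 ≤ x) (hτ : ∀ x ∈ τ, 1 ≤ x)
    (h : ∀ m < n, ncAvoidCount m (pat2 σ τ) = ncAvoidCount m (pat2 τ σ)) (k : ℕ × Prop × Prop) :
    (ncAvoidersBelow (pat2 σ τ) n ∩ blockType σ τ ⁻¹' {k}).ncard =
      (ncAvoidersBelow (pat2 τ σ) n ∩ blockType σ τ ⁻¹' {k}).ncard := by
  obtain ⟨m, P, Q⟩ := k
  have mem_comm : ∀ {w}, ¬(PatContains w σ ∧ PatContains w τ) →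
      (w ∈ ncAvoiders (pat2 σ τ) ↔ w ∈ ncAvoiders (pat2 τ σ)) := fun hw =>
    and_congr_right' (and_congr_right' (iff_of_true (fun hp => hw (hp.of_pat2 hσ hτ))
      fun hp => hw (hp.of_pat2 hτ hσ).symm))
  by_cases hk : m < n ∧ P ∧ Q
  · obtain ⟨hm, hP, hQ⟩ := hk
    have hfib : ∀ p, ncAvoidersBelow p n ∩ blockType σ τ ⁻¹' {(m, P, Q)} =
        {w | w ∈ ncAvoiders p ∧ w.length = m} ∩ {w | PatContains w σ ∧ PatContains w τ} := by
      intro p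
      ext w
      simp only [ncAvoidersBelow, blockType, Set.mem_inter_iff, Set.mem_ofPred_eq,
        Set.mem_preimage, Set.mem_singleton_iff, Prod.mk.injEq, eq_iff_iff, hP, hQ, iff_true]
      grind
    rw [hfib, hfib]
    refine ncard_inter_eq_of_ncard_eq_of_sdiff_eq (finite_setOf_mem_ncAvoiders_and_length_eq _ m)
      (finite_setOf_mem_ncAvoiders_and_length_eq _ m) ?_ ?_
    · rw [← ncAvoidCount_eq_ncard, ← ncAvoidCount_eq_ncard, h m hm]
    · ext w
      exact and_congr_left fun hw => and_congr_left' (mem_comm hw)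
  · congr 1 with w
    refine and_congr_left fun hw => and_congr_left fun hwn => mem_comm fun hw' => hk ?_
    cases hw
    exact ⟨hwn, hw'⟩

theorem exists_bijOn_ncAvoidersBelow (hσ : ∀ x ∈ σ, 1 ≤ x) (hτ : ∀ x ∈ τ, 1 ≤ x)
    (h : ∀ m < n, ncAvoidCount m (pat2 σ τ) = ncAvoidCount m (pat2 τ σ)) :
    ∃ f : List ℕ → List ℕ, Set.BijOn f (ncAvoidersBelow (pat2 σ τ) n)
        (ncAvoidersBelow (pat2 τ σ) n) ∧
      ∀ w ∈ ncAvoidersBelow (pat2 σ τ) n, blockType σ τ (f w) = blockType σ τ w := by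
  have hfin : ∀ p k, (ncAvoidersBelow p n ∩ blockType σ τ ⁻¹' {k}).Finite := fun p k =>
    (finite_setOf_mem_ncAvoiders_and_length_eq p k.1).subset
      fun _ ⟨hw, hwk⟩ => ⟨hw.1, congrArg Prod.fst hwk⟩
  exact exists_bijOn_of_ncard_fiber_eq (hfin _) (hfin _) (ncard_fiber_blockType_eq hσ hτ h)

theorem mapsTo_reverse_map_blockLists {f : List ℕ → List ℕ}
    (hf : Set.MapsTo f (ncAvoidersBelow (pat2 σ τ) n) (ncAvoidersBelow (pat2 τ σ) n))
    (hft : ∀ w ∈ ncAvoidersBelow (pat2 σ τ) n, blockType σ τ (f w) = blockType σ τ w) :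
    Set.MapsTo (fun l => (l.map f).reverse) (blockLists σ τ n) (blockLists τ σ n) := by
  intro l hl
  have hmem : ∀ c ∈ l, c ∈ ncAvoidersBelow (pat2 σ τ) n := fun c hc =>
    mem_ncAvoidersBelow_of_mem_blockLists hl hc
  have htype : ∀ c ∈ l, (f c).length = c.length ∧ PatContains (f c) σ = PatContains c σ ∧
      PatContains (f c) τ = PatContains c τ := fun c hc => by
    simpa only [blockType, Prod.mk.injEq] using hft c (hmem c hc)
  obtain ⟨-, hpair, hlen⟩ := hl
  refine ⟨?_, ?_, ?_⟩
  · simp only [List.mem_reverse, List.forall_mem_map]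
    exact fun c hc => (hf (hmem c hc)).1
  · rw [List.pairwise_reverse, List.pairwise_map]
    refine hpair.imp_of_mem fun {c d} hc hd hcd => ?_
    rwa [(htype c hc).2.1, (htype d hd).2.2, and_comm]
  · rw [List.map_reverse, List.sum_reverse, List.map_map, ← hlen]
    exact congrArg _ (List.map_congr_left fun c hc => congrArg (· + 1) (htype c hc).1)

theorem ncard_blockLists_comm (hσ : ∀ x ∈ σ, 1 ≤ x) (hτ : ∀ x ∈ τ, 1 ≤ x)
    (h : ∀ m < n, ncAvoidCount m (pat2 σ τ) = ncAvoidCount m (pat2 τ σ)) :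
    (blockLists σ τ n).ncard = (blockLists τ σ n).ncard := by
  obtain ⟨f, hf, hft⟩ := exists_bijOn_ncAvoidersBelow hσ hτ h
  have hinv := hf.invOn_invFunOn
  have hg := hf.symm hinv.symm
  set g := Function.invFunOn f (ncAvoidersBelow (pat2 σ τ) n)
  have hgt : ∀ w ∈ ncAvoidersBelow (pat2 τ σ) n, blockType τ σ (g w) = blockType τ σ w :=
    fun w hw => blockType_eq_comm.1 (by rw [← hft _ (hg.mapsTo hw), hinv.2 hw])
  refine Set.BijOn.ncard_eq (Set.InvOn.bijOn (f' := fun l => (l.map g).reverse) ⟨?_, ?_⟩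
    (mapsTo_reverse_map_blockLists hf.mapsTo hft) (mapsTo_reverse_map_blockLists hg.mapsTo hgt))
  · exact fun l hl => reverse_map_reverse_map_of_forall_mem fun c hc =>
      hinv.1 (mem_ncAvoidersBelow_of_mem_blockLists hl hc)
  · exact fun l hl => reverse_map_reverse_map_of_forall_mem fun c hc =>
      hinv.2 (mem_ncAvoidersBelow_of_mem_blockLists hl hc)

end Counting

theorem stmt11_general {σ τ : List ℕ} (hσ : ∀ x ∈ σ, 1 ≤ x) (hσi : SumIndecomposable σ)
    (hτ : ∀ x ∈ τ, 1 ≤ x) (hτi : SumIndecomposable τ) (n : ℕ) :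
    ncAvoidCount n (pat2 σ τ) = ncAvoidCount n (pat2 τ σ) := by
  induction n using Nat.strong_induction_on with
  | _ n ih =>
    rw [ncAvoidCount_pat2_eq_ncard_blockLists hσ hσi hτ hτi,
      ncAvoidCount_pat2_eq_ncard_blockLists hτ hτi hσ hσi]
    exact ncard_blockLists_comm hσ hτ ih

/-- Theorem 3.7: for `σ, τ` each empty or connected, the patterns `1[σ]1[τ]`
and `1[τ]1[σ]` are nc-equivalent. -/
theorem stmt11 (σ τ : List ℕ)
    (hσ : IsRGF σ) (hσnc : NonCrossing σ) (hσc : σ = [] ∨ Connected σ)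
    (hτ : IsRGF τ) (hτnc : NonCrossing τ) (hτc : τ = [] ∨ Connected τ) :
    ∀ n : ℕ, ncAvoidCount n (pat2 σ τ) = ncAvoidCount n (pat2 τ σ) :=
  stmt11_general hσ.1 (hσ.sumIndecomposable hσc) hτ.1 (hτ.sumIndecomposable hτc)
end

section
/- For every n, the number of non-crossing RGFs of length n avoiding the pattern 12333 equals the number of non-crossing RGFs of length n avoiding the pattern 12321; moreover, for every n ≥ 1 this common value satisfies 2·p_n(1212, 12321) = 3^{n−1} + 1. -/
/-! Appending letters one at a time organises the words avoiding either pair of patterns into a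
generating tree. Each of the three patterns ends in two letters that occur earlier in it, so a new
maximum may always be appended, never hinders a later letter, and may itself be repeated: only the
number and the kind of the old letters that may still be appended (the *active* letters) matter.

For `{1212, 12321}`, a node with `k` active letters has one child with `k + 1` of them (the new
maximum), one with `k` (repeating the last letter), and `k - 1` children with a single one, whence
twice the number of its descendants `n` levels below is `(3 ^ n - 1) * k + 2`.

For `{1212, 12333}`, a letter at least `3` may occur only twice while `1` and `2` repeat freely.
Put `S = 1 + X + X ^ 2`. A node with maximum at least `2` and `m` active letters at least `3` has
`[X ^ n] (1 + X) ^ (m + 1) * S ^ n` descendants `n` levels below if `1` is active and `2` is not,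
and `[X ^ n] (1 + X) ^ (m + 1) / (1 - X) * S ^ n` if both are. The recursion of the tree turns into
identities between these coefficients because `[X ^ (n + 1)] (1 - X ^ 2) * S ^ n = 0`, and for
`m = 0` the second one is `3 ^ n` because `S = 3 * X + (1 - X) ^ 2`. Hence the node `1`, whose
children are `11`, of the same kind, and `12`, has `(3 ^ n + 1) / 2` descendants.
-/

section Pattern

variable {w v p q s t : List ℕ} {f : ℕ → ℕ} {a b c x y z : ℕ}

theorem WordOrdIso.getD_congr (h : WordOrdIso s t) {i j : ℕ} (hi : i < t.length)
    (hj : j < t.length) (hij : t.getD i 0 = t.getD j 0) : s.getD i 0 = s.getD j 0 := by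
  have hi' : i < s.length := h.1 ▸ hi
  have hj' : j < s.length := h.1 ▸ hj
  have hlt := h.2 i j hi' hj'
  have hgt := h.2 j i hj' hi'
  omega

theorem wordOrdIso_map_s13 (hf : StrictMonoOn f {x | x ∈ t}) : WordOrdIso (t.map f) t := by
  refine ⟨List.length_map f, fun i j hi hj => ?_⟩
  rw [List.length_map] at hi hj
  simp only [List.getD_eq_getElem?_getD, List.getElem?_map, List.getElem?_eq_getElem hi,
    List.getElem?_eq_getElem hj, Option.map_some, Option.getD_some]
  exact hf.lt_iff_lt (t.getElem_mem hi) (t.getElem_mem hj)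

theorem wordOrdIso_iff_exists_map :
    WordOrdIso s t ↔ ∃ f : ℕ → ℕ, StrictMonoOn f {x | x ∈ t} ∧ s = t.map f := by
  refine ⟨fun h => ⟨fun x => s.getD (t.idxOf x) 0, fun x hx y hy hxy => ?_, ?_⟩, ?_⟩
  · have hx' := List.idxOf_lt_length_of_mem hx
    have hy' := List.idxOf_lt_length_of_mem hy
    refine (h.2 _ _ (h.1 ▸ hx') (h.1 ▸ hy')).2 ?_
    rwa [List.getD_eq_getElem _ _ hx', List.getD_eq_getElem _ _ hy', List.getElem_idxOf,
      List.getElem_idxOf]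
  · refine List.ext_getElem (by rw [List.length_map, h.1]) fun i hi hi' => ?_
    rw [List.length_map] at hi'
    have hidx := List.idxOf_lt_length_of_mem (t.getElem_mem hi')
    rw [List.getElem_map, ← List.getD_eq_getElem s 0 hi]
    refine h.getD_congr hi' hidx ?_
    rw [List.getD_eq_getElem _ _ hi', List.getD_eq_getElem _ _ hidx, List.getElem_idxOf]
  · rintro ⟨f, hf, rfl⟩
    exact wordOrdIso_map_s13 hf

theorem patContains_iff_exists_map :
    PatContains w p ↔ ∃ f : ℕ → ℕ, StrictMonoOn f {x | x ∈ p} ∧ (p.map f).Sublist w := by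
  simp only [PatContains, wordOrdIso_iff_exists_map]
  constructor
  · rintro ⟨_, hs, f, hf, rfl⟩
    exact ⟨f, hf, hs⟩
  · rintro ⟨f, hf, hs⟩
    exact ⟨_, hs, f, hf, rfl⟩

theorem PatAvoids.mono (h : PatAvoids w p) (hv : v.Sublist w) : PatAvoids v p :=
  fun ⟨s, hs, hp⟩ => h ⟨s, hs.trans hv, hp⟩

theorem patAvoids_nil (hp : p ≠ []) : PatAvoids [] p := by
  rintro ⟨s, hs, hsp⟩
  rw [List.sublist_nil.1 hs] at hsp
  exact hp (List.length_eq_zero_iff.1 hsp.1.symm)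

theorem append_singleton_sublist_append_singleton :
    (s ++ [a]).Sublist (w ++ [b]) ↔ (s ++ [a]).Sublist w ∨ a = b ∧ s.Sublist w := by
  rw [← List.reverse_sublist, ← List.reverse_sublist (l₂ := w),
    ← List.reverse_sublist (l₁ := s)]
  simp only [List.reverse_append, List.reverse_singleton, List.singleton_append]
  exact List.cons_sublist_cons'

theorem PatAvoids.append_singleton (hw : PatAvoids w (q ++ [y]))
    (h : ∀ f : ℕ → ℕ, StrictMonoOn f {x | x ∈ q ++ [y]} → f y = b → ¬ (q.map f).Sublist w) :
    PatAvoids (w ++ [b]) (q ++ [y]) := by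
  rw [PatAvoids, patContains_iff_exists_map]
  rintro ⟨f, hf, hs⟩
  rw [List.map_append, List.map_singleton, append_singleton_sublist_append_singleton] at hs
  rcases hs with hs | ⟨hy, hs⟩
  · exact hw (patContains_iff_exists_map.2 ⟨f, hf, by simpa using hs⟩)
  · exact h f hf hy hs

theorem PatAvoids.append_pair (hb : PatAvoids (w ++ [b]) (q ++ [y, z]))
    (hc : PatAvoids (w ++ [c]) (q ++ [y, z]))
    (h : ∀ f : ℕ → ℕ, StrictMonoOn f {x | x ∈ q ++ [y, z]} → f y = b → f z = c →
      ¬ (q.map f).Sublist w) :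
    PatAvoids (w ++ [b] ++ [c]) (q ++ [y, z]) := by
  rw [List.append_cons q] at hb hc h ⊢
  refine hb.append_singleton fun f hf hz hs => ?_
  rw [List.map_append, List.map_singleton, append_singleton_sublist_append_singleton] at hs
  rcases hs with hs | ⟨hy, hs⟩
  · refine hc (patContains_iff_exists_map.2 ⟨f, hf, ?_⟩)
    simpa [hz] using hs.append_right [c]
  · exact h f hf hy hz hs

/-- The last two letters of `p` both occur earlier in `p`, so that a letter occurring once in a
word cannot play the role of either of them. -/
def EndsInRepeats (p : List ℕ) : Prop :=
  ∃ q y z, p = q ++ [y, z] ∧ y ∈ q ∧ z ∈ q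

theorem EndsInRepeats.ne_nil (hp : EndsInRepeats p) : p ≠ [] := by
  obtain ⟨q, y, z, rfl, -, -⟩ := hp
  simp

theorem EndsInRepeats.patAvoids_append_singleton (hp : EndsInRepeats p) (hw : PatAvoids w p)
    (hx : x ∉ w) : PatAvoids (w ++ [x]) p := by
  obtain ⟨q, y, z, rfl, -, hz⟩ := hp
  rw [List.append_cons q] at hw ⊢
  refine hw.append_singleton fun f _ hfz hs => hx (hs.subset ?_)
  exact List.mem_map.2 ⟨z, List.mem_append_left _ hz, hfz⟩

theorem EndsInRepeats.patAvoids_append_pair (hp : EndsInRepeats p)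
    (hb : PatAvoids (w ++ [b]) p) (hx : x ∉ w) : PatAvoids (w ++ [x] ++ [b]) p := by
  have hw : PatAvoids (w ++ [x]) p :=
    hp.patAvoids_append_singleton (hb.mono (List.sublist_append_left w [b])) hx
  obtain ⟨q, y, z, rfl, hy, -⟩ := hp
  exact hw.append_pair hb fun f _ hfy _ hs => hx (hs.subset (List.mem_map.2 ⟨y, hy, hfy⟩))

theorem endsInRepeats_1212 : EndsInRepeats [1, 2, 1, 2] := ⟨[1, 2], 1, 2, by simp⟩

theorem endsInRepeats_12321 : EndsInRepeats [1, 2, 3, 2, 1] := ⟨[1, 2, 3], 2, 1, by simp⟩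

theorem endsInRepeats_12333 : EndsInRepeats [1, 2, 3, 3, 3] := ⟨[1, 2, 3], 3, 3, by simp⟩

theorem patContains_1212 (hab : a < b) (h : [a, b, a, b].Sublist w) :
    PatContains w [1, 2, 1, 2] := by
  refine patContains_iff_exists_map.2 ⟨fun x => if x = 1 then a else b, ?_, by simpa using h⟩
  simp [StrictMonoOn, hab]

theorem patContains_12321 (hab : a < b) (hbc : b < c) (h : [a, b, c, b, a].Sublist w) :
    PatContains w [1, 2, 3, 2, 1] := by
  refine patContains_iff_exists_map.2
    ⟨fun x => if x = 1 then a else if x = 2 then b else c, ?_, by simpa using h⟩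
  simp [StrictMonoOn, hab, hbc, hab.trans hbc]

theorem patContains_12333 (hab : a < b) (hbc : b < c) (h : [a, b, c, c, c].Sublist w) :
    PatContains w [1, 2, 3, 3, 3] := by
  refine patContains_iff_exists_map.2
    ⟨fun x => if x = 1 then a else if x = 2 then b else c, ?_, by simpa using h⟩
  simp [StrictMonoOn, hab, hbc, hab.trans hbc]

theorem patAvoids_1212_append_pair (hcb : c ≤ b) (hb : PatAvoids (w ++ [b]) [1, 2, 1, 2])
    (hc : PatAvoids (w ++ [c]) [1, 2, 1, 2]) : PatAvoids (w ++ [b] ++ [c]) [1, 2, 1, 2] := by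
  refine PatAvoids.append_pair (q := [1, 2]) hb hc fun f hf h1 h2 _ => ?_
  have : f 1 < f 2 := hf (by simp) (by simp) one_lt_two
  omega

theorem patAvoids_12321_append_pair (hb : PatAvoids (w ++ [b]) [1, 2, 3, 2, 1])
    (hc : PatAvoids (w ++ [c]) [1, 2, 3, 2, 1])
    (h : c < b → ∀ d, b < d → ¬ [c, b, d].Sublist w) :
    PatAvoids (w ++ [b] ++ [c]) [1, 2, 3, 2, 1] := by
  refine PatAvoids.append_pair (q := [1, 2, 3]) hb hc fun f hf h2 h1 hs => ?_
  have h12 : f 1 < f 2 := hf (by simp) (by simp) (by simp)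
  have h23 : f 2 < f 3 := hf (by simp) (by simp) (by simp)
  exact h (by omega) (f 3) (by omega) (by simpa [h1, h2] using hs)

theorem patAvoids_12333_append_pair (hw : ∀ x ∈ w, 1 ≤ x)
    (hb : PatAvoids (w ++ [b]) [1, 2, 3, 3, 3]) (hc : PatAvoids (w ++ [c]) [1, 2, 3, 3, 3])
    (h : b = c → b ≤ 2) : PatAvoids (w ++ [b] ++ [c]) [1, 2, 3, 3, 3] := by
  refine PatAvoids.append_pair (q := [1, 2, 3]) hb hc fun f hf h3b h3c hs => ?_
  have h12 : f 1 < f 2 := hf (by simp) (by simp) (by simp)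
  have h23 : f 2 < f 3 := hf (by simp) (by simp) (by simp)
  have h1 : 1 ≤ f 1 := hw _ (hs.subset (by simp))
  omega

end Pattern

/-- The largest letter of a word, with value `0` on the empty word. -/
def maxLetter (w : List ℕ) : ℕ := w.foldr max 0

section RGF

variable {w u v s : List ℕ} {a b c : ℕ}

theorem le_maxLetter (h : a ∈ w) : a ≤ maxLetter w := by
  induction w with
  | nil => simp at h
  | cons x w ih =>
    rcases List.mem_cons.1 h with rfl | h
    · exact le_max_left _ _
    · exact (ih h).trans (le_max_right _ _)

@[simp]
theorem maxLetter_append_singleton (w : List ℕ) (b : ℕ) :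
    maxLetter (w ++ [b]) = max (maxLetter w) b := by
  induction w with
  | nil => simp [maxLetter]
  | cons x w ih =>
    change max x (maxLetter (w ++ [b])) = max (max x (maxLetter w)) b
    rw [ih, max_assoc]

theorem maxLetter_succ_notMem (w : List ℕ) : maxLetter w + 1 ∉ w :=
  fun h => (le_maxLetter h).not_gt (Nat.lt_succ_self _)

theorem isRGF_nil : IsRGF [] := by simp [IsRGF]

theorem isRGF_append_singleton :
    IsRGF (w ++ [b]) ↔ IsRGF w ∧ 1 ≤ b ∧ b ≤ maxLetter w + 1 := by
  rcases eq_or_ne w [] with rfl | hw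
  · have hsingleton : IsRGF ([] ++ [b]) ↔ 1 ≤ b ∧ b = 1 := by simp [IsRGF]
    rw [hsingleton, and_iff_right isRGF_nil, maxLetter, List.foldr_nil]
    omega
  have hpos : 0 < w.length := List.length_pos_iff.2 hw
  constructor
  · rintro ⟨hone, hhead, hstep⟩
    refine ⟨⟨fun x hx => hone x (by simp [hx]), fun _ => ?_, fun i hi => ?_⟩,
      hone b (by simp), ?_⟩
    · rw [← List.getD_append _ [b] _ _ hpos]
      exact hhead (by simp)
    · have := hstep i (by rw [List.length_append]; omega)
      rwa [List.getD_append _ _ _ _ hi, List.take_append_of_le_length hi.le] at this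
    · have := hstep (w.length - 1)
        (by rw [List.length_append, List.length_singleton]; omega)
      rw [Nat.sub_add_cancel hpos] at this
      simpa [maxLetter] using this
  · rintro ⟨⟨hone, hhead, hstep⟩, hb, hb'⟩
    refine ⟨fun x hx => ?_, fun _ => ?_, fun i hi => ?_⟩
    · rcases List.mem_append.1 hx with hx | hx
      · exact hone x hx
      · rwa [List.mem_singleton.1 hx]
    · rw [List.getD_append _ _ _ _ hpos]
      exact hhead hw
    · rcases lt_or_eq_of_le (show i + 1 ≤ w.length by simpa using hi) with h | h
      · rw [List.getD_append _ _ _ _ h, List.take_append_of_le_length h.le]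
        exact hstep i h
      · simpa [h, maxLetter] using hb'

theorem IsRGF.of_append (h : IsRGF (u ++ v)) : IsRGF u := by
  induction v using List.reverseRecOn with
  | nil => simpa using h
  | append_singleton v b ih =>
    rw [← List.append_assoc, isRGF_append_singleton] at h
    exact ih h.1

theorem IsRGF.mem_of_le_maxLetter (h : IsRGF w) (ha : 1 ≤ a) (haw : a ≤ maxLetter w) :
    a ∈ w := by
  induction w using List.reverseRecOn with
  | nil =>
    rw [maxLetter, List.foldr_nil] at haw
    omega
  | append_singleton w b ih =>
    obtain ⟨hw, -, hb⟩ := isRGF_append_singleton.1 h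
    rw [maxLetter_append_singleton] at haw
    rw [List.mem_append, List.mem_singleton]
    by_cases hab : a = b
    · exact Or.inr hab
    · exact Or.inl (ih hw (by omega))

theorem IsRGF.cons_sublist_of_lt (h : IsRGF w) (hs : (c :: s).Sublist w) (ha : 1 ≤ a)
    (hac : a < c) : (a :: c :: s).Sublist w := by
  obtain ⟨w₁, w₂, rfl, hc, hs'⟩ := List.cons_sublist_iff.1 hs
  obtain ⟨u, v, rfl⟩ := List.append_of_mem hc
  have hu : IsRGF (u ++ [c]) := by
    refine IsRGF.of_append (v := v ++ w₂) ?_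
    simpa using h
  obtain ⟨hu, -, hcu⟩ := isRGF_append_singleton.1 hu
  have hau : a ∈ u := hu.mem_of_le_maxLetter ha (by omega)
  have hcs : (c :: s).Sublist (c :: v ++ w₂) :=
    (hs'.trans (List.sublist_append_right v w₂)).cons_cons c
  simpa using (List.singleton_sublist.2 hau).append hcs

end RGF

/-- Restricted growth functions avoiding every pattern in `T`, of arbitrary length. -/
def Admissible (T : Set (List ℕ)) (w : List ℕ) : Prop :=
  IsRGF w ∧ ∀ p ∈ T, PatAvoids w p

section GeneratingTree

variable {T : Set (List ℕ)} {w : List ℕ} {b c : ℕ}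

theorem admissible_nil (hT : ∀ p ∈ T, EndsInRepeats p) : Admissible T [] :=
  ⟨isRGF_nil, fun p hp => patAvoids_nil (hT p hp).ne_nil⟩

theorem Admissible.of_append_singleton (h : Admissible T (w ++ [b])) : Admissible T w :=
  ⟨h.1.of_append, fun p hp => (h.2 p hp).mono (List.sublist_append_left w [b])⟩

theorem Admissible.append_maxLetter_succ (hT : ∀ p ∈ T, EndsInRepeats p)
    (h : Admissible T w) : Admissible T (w ++ [maxLetter w + 1]) :=
  ⟨isRGF_append_singleton.2 ⟨h.1, by omega, le_rfl⟩, fun p hp =>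
    (hT p hp).patAvoids_append_singleton (h.2 p hp) (maxLetter_succ_notMem w)⟩

open Classical in
/-- The letters that may be appended to `w`: its children in the generating tree of the
`T`-avoiding restricted growth functions. -/
noncomputable def nextLetters (T : Set (List ℕ)) (w : List ℕ) : Finset ℕ :=
  {b ∈ Finset.range (maxLetter w + 2) | Admissible T (w ++ [b])}

theorem mem_nextLetters : b ∈ nextLetters T w ↔ Admissible T (w ++ [b]) := by
  simp only [nextLetters, Finset.mem_filter, Finset.mem_range, and_iff_right_iff_imp]
  intro h
  have := (isRGF_append_singleton.1 h.1).2.2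
  omega

/-- The number of ways to append `n` letters to `w`, staying admissible at each step. -/
noncomputable def extCount (T : Set (List ℕ)) : ℕ → List ℕ → ℕ
  | 0, _ => 1
  | n + 1, w => ∑ b ∈ nextLetters T w, extCount T n (w ++ [b])

@[simp]
theorem extCount_zero : extCount T 0 w = 1 := rfl

/-- Level `n` of the generating tree: the admissible words of length `n`. -/
noncomputable def admissibleWords (T : Set (List ℕ)) : ℕ → Finset (List ℕ)
  | 0 => {[]}
  | n + 1 => ((admissibleWords T n).sigma (nextLetters T)).image fun x => x.1 ++ [x.2]

theorem mem_admissibleWords (hT : ∀ p ∈ T, EndsInRepeats p) {n : ℕ} :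
    w ∈ admissibleWords T n ↔ Admissible T w ∧ w.length = n := by
  induction n generalizing w with
  | zero =>
    rw [admissibleWords, Finset.mem_singleton, List.length_eq_zero_iff]
    exact ⟨fun h => ⟨h ▸ admissible_nil hT, h⟩, fun h => h.2⟩
  | succ n ih =>
    simp only [admissibleWords, Finset.mem_image, Finset.mem_sigma, Sigma.exists,
      mem_nextLetters, ih]
    constructor
    · rintro ⟨u, b, ⟨⟨-, rfl⟩, hb⟩, rfl⟩
      exact ⟨hb, by simp⟩
    · rintro ⟨hw, hn⟩
      obtain ⟨u, b, rfl⟩ :=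
        (List.eq_nil_or_concat' w).resolve_left (List.ne_nil_of_length_eq_add_one hn)
      exact ⟨u, b, ⟨⟨hw.of_append_singleton, by simpa using hn⟩, hw⟩, rfl⟩

theorem sum_admissibleWords_succ (n : ℕ) (F : List ℕ → ℕ) :
    ∑ w ∈ admissibleWords T (n + 1), F w =
      ∑ w ∈ admissibleWords T n, ∑ b ∈ nextLetters T w, F (w ++ [b]) := by
  rw [admissibleWords, Finset.sum_image, Finset.sum_sigma]
  rintro ⟨u, b⟩ - ⟨v, c⟩ - h
  obtain ⟨rfl, h⟩ := List.append_inj' h rfl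
  obtain rfl := List.singleton_injective h
  rfl

theorem sum_extCount_admissibleWords (m n : ℕ) :
    ∑ w ∈ admissibleWords T m, extCount T n w = (admissibleWords T (m + n)).card := by
  induction n generalizing m with
  | zero => simp
  | succ n ih => rw [← add_assoc, Nat.add_right_comm, ← ih, sum_admissibleWords_succ]; rfl

theorem pCount_eq_extCount (hT : ∀ p ∈ T, EndsInRepeats p) (n : ℕ) :
    pCount n T = extCount T n [] := by
  have hset : {w : List ℕ | IsRGF w ∧ w.length = n ∧ ∀ p ∈ T, PatAvoids w p} =
      admissibleWords T n := by
    ext w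
    rw [Finset.mem_coe, mem_admissibleWords hT, Admissible, Set.mem_ofPred_eq]
    tauto
  rw [pCount, hset, Set.ncard_coe_finset, ← Nat.zero_add n, ← sum_extCount_admissibleWords,
    admissibleWords, Finset.sum_singleton, Nat.zero_add]

open Classical in
/-- The letters already used in `w` that may be appended to it again. -/
noncomputable def activeLetters (T : Set (List ℕ)) (w : List ℕ) : Finset ℕ :=
  {b ∈ Finset.range (maxLetter w + 1) | Admissible T (w ++ [b])}

theorem mem_activeLetters :
    b ∈ activeLetters T w ↔ b ≤ maxLetter w ∧ Admissible T (w ++ [b]) := by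
  simp [activeLetters]

theorem activeLetters_nil : activeLetters T [] = ∅ := by
  refine Finset.eq_empty_of_forall_notMem fun b hb => ?_
  obtain ⟨hle, hb⟩ := mem_activeLetters.1 hb
  have := (isRGF_append_singleton.1 hb.1).2.1
  rw [maxLetter, List.foldr_nil] at hle
  omega

theorem maxLetter_succ_notMem_activeLetters : maxLetter w + 1 ∉ activeLetters T w :=
  fun h => (mem_activeLetters.1 h).1.not_gt (Nat.lt_succ_self _)

theorem nextLetters_eq_insert (hT : ∀ p ∈ T, EndsInRepeats p) (h : Admissible T w) :
    nextLetters T w = insert (maxLetter w + 1) (activeLetters T w) := by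
  ext b
  rw [mem_nextLetters, Finset.mem_insert, mem_activeLetters]
  constructor
  · intro hb
    have := (isRGF_append_singleton.1 hb.1).2.2
    exact (Nat.le_succ_iff_eq_or_le.1 this).imp_right fun hle => ⟨hle, hb⟩
  · rintro (rfl | hb)
    · exact h.append_maxLetter_succ hT
    · exact hb.2

theorem extCount_succ (hT : ∀ p ∈ T, EndsInRepeats p) (h : Admissible T w) (n : ℕ) :
    extCount T (n + 1) w = extCount T n (w ++ [maxLetter w + 1]) +
      ∑ b ∈ activeLetters T w, extCount T n (w ++ [b]) := by
  rw [extCount, nextLetters_eq_insert hT h,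
    Finset.sum_insert maxLetter_succ_notMem_activeLetters]

theorem pCount_succ (hT : ∀ p ∈ T, EndsInRepeats p) (n : ℕ) :
    pCount (n + 1) T = extCount T n [1] := by
  rw [pCount_eq_extCount hT, extCount_succ hT (admissible_nil hT), activeLetters_nil,
    Finset.sum_empty, add_zero]
  rfl

theorem admissible_singleton_one (hT : ∀ p ∈ T, EndsInRepeats p) : Admissible T [1] :=
  (admissible_nil hT).append_maxLetter_succ hT

theorem activeLetters_append_subset (hb : b ≤ maxLetter w) :
    activeLetters T (w ++ [b]) ⊆ activeLetters T w := by
  intro c hc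
  rw [mem_activeLetters, maxLetter_append_singleton, max_eq_left hb] at hc
  obtain ⟨hcw, hc, hav⟩ := hc
  obtain ⟨hrgf, hc1, hc2⟩ := isRGF_append_singleton.1 hc
  rw [maxLetter_append_singleton, max_eq_left hb] at hc2
  have hsub : (w ++ [c]).Sublist (w ++ [b] ++ [c]) := by simp
  exact mem_activeLetters.2 ⟨hcw, isRGF_append_singleton.2 ⟨hrgf.of_append, hc1, hc2⟩,
    fun p hp => (hav p hp).mono hsub⟩

theorem mem_activeLetters_append (hb : Admissible T (w ++ [b]))
    (hc : Admissible T (w ++ [c])) (hcb : c ≤ maxLetter (w ++ [b]))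
    (hav : ∀ p ∈ T, PatAvoids (w ++ [b] ++ [c]) p) : c ∈ activeLetters T (w ++ [b]) :=
  mem_activeLetters.2 ⟨hcb, isRGF_append_singleton.2
    ⟨hb.1, (isRGF_append_singleton.1 hc.1).2.1, by omega⟩, hav⟩

theorem activeLetters_append_maxLetter_succ (hT : ∀ p ∈ T, EndsInRepeats p)
    (h : Admissible T w) :
    activeLetters T (w ++ [maxLetter w + 1]) =
      insert (maxLetter w + 1) (activeLetters T w) := by
  have hnew := h.append_maxLetter_succ hT
  ext c
  rw [Finset.mem_insert]
  constructor
  · intro hc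
    obtain ⟨hle, hc, hav⟩ := mem_activeLetters.1 hc
    rw [maxLetter_append_singleton] at hle
    refine or_iff_not_imp_left.2 fun hne => mem_activeLetters.2 ⟨by omega, ?_⟩
    have hsub : (w ++ [c]).Sublist (w ++ [maxLetter w + 1] ++ [c]) := by simp
    exact ⟨isRGF_append_singleton.2 ⟨h.1, (isRGF_append_singleton.1 hc).2.1, by omega⟩,
      fun p hp => (hav p hp).mono hsub⟩
  · intro hc
    have hc' : Admissible T (w ++ [c]) ∧ c ≤ maxLetter w + 1 := by
      rcases hc with rfl | hc
      · exact ⟨hnew, le_rfl⟩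
      · exact ⟨(mem_activeLetters.1 hc).2, by have := (mem_activeLetters.1 hc).1; omega⟩
    refine mem_activeLetters_append hnew hc'.1 (by simpa using hc'.2) fun p hp => ?_
    exact (hT p hp).patAvoids_append_pair (hc'.1.2 p hp) (maxLetter_succ_notMem w)

theorem activeLetters_singleton_one (hT : ∀ p ∈ T, EndsInRepeats p) :
    activeLetters T [1] = {1} := by
  simpa [activeLetters_nil, maxLetter] using
    activeLetters_append_maxLetter_succ hT (admissible_nil hT)

theorem le_of_mem_activeLetters_append (hT : [1, 2, 1, 2] ∈ T)
    (hc : c ∈ activeLetters T (w ++ [b])) : c ≤ b := by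
  obtain ⟨hle, hc, hav⟩ := mem_activeLetters.1 hc
  obtain ⟨hwb, hc1, -⟩ := isRGF_append_singleton.1 hc
  obtain ⟨hw, hb1, -⟩ := isRGF_append_singleton.1 hwb
  rw [maxLetter_append_singleton] at hle
  by_contra! hbc
  have hcw : [c].Sublist w :=
    List.singleton_sublist.2 (hw.mem_of_le_maxLetter hc1 (by omega))
  have hbcw : [b, c].Sublist w := hw.cons_sublist_of_lt hcw hb1 hbc
  exact hav _ hT (patContains_1212 hbc (by simpa using hbcw.append_right [b, c]))

end GeneratingTree

section CentralCoeff

open PowerSeries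

/-- The functional `W ↦ [X ^ n] W * (1 + X + X ^ 2) ^ n`. -/
noncomputable def centralCoeff (n : ℕ) : ℤ⟦X⟧ →ₗ[ℤ] ℤ :=
  coeff n ∘ₗ LinearMap.mulRight ℤ ((1 + X + X ^ 2) ^ n)

theorem centralCoeff_apply (n : ℕ) (W : ℤ⟦X⟧) :
    centralCoeff n W = coeff n (W * (1 + X + X ^ 2) ^ n) := rfl

theorem centralCoeff_zero (W : ℤ⟦X⟧) : centralCoeff 0 W = constantCoeff W := by
  simp [centralCoeff_apply]

theorem coeff_succ_one_sub_sq_mul_trinomial_pow (n : ℕ) :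
    coeff (n + 1) ((1 - X ^ 2) * (1 + X + X ^ 2) ^ n : ℤ⟦X⟧) = 0 := by
  set S : ℤ⟦X⟧ := 1 + X + X ^ 2
  have hS : d⁄dX ℤ S = 1 + 2 * X := by simp [S]
  have hderiv : d⁄dX ℤ (S ^ (n + 1)) = (n + 1 : ℤ) • (S ^ n * (1 + 2 * X)) := by
    rw [derivative_pow, hS, Nat.add_sub_cancel, zsmul_eq_mul]
    push_cast
    ring
  have hcoeff : coeff (n + 1) (S ^ (n + 1)) = coeff n (S ^ n * (1 + 2 * X)) := by
    have h := coeff_derivative (R := ℤ) (S ^ (n + 1)) n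
    rw [hderiv, map_zsmul, smul_eq_mul, mul_comm] at h
    exact (mul_right_cancel₀ (by positivity) h).symm
  have hsplit : (1 - X ^ 2) * S ^ n = S ^ (n + 1) - X * (S ^ n * (1 + 2 * X)) := by
    simp only [S]
    ring
  rw [hsplit, map_sub, coeff_succ_X_mul, hcoeff, sub_self]

theorem centralCoeff_succ_of_mul_eq {W V : ℤ⟦X⟧}
    (h : W * (1 + X + X ^ 2) = X * V + (1 - X ^ 2)) (n : ℕ) :
    centralCoeff (n + 1) W = centralCoeff n V := by
  have hpow : W * (1 + X + X ^ 2) ^ (n + 1) =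
      X * (V * (1 + X + X ^ 2) ^ n) + (1 - X ^ 2) * (1 + X + X ^ 2) ^ n := by
    linear_combination (1 + X + X ^ 2) ^ n * h
  rw [centralCoeff_apply, centralCoeff_apply, hpow, map_add, coeff_succ_X_mul,
    coeff_succ_one_sub_sq_mul_trinomial_pow, add_zero]

theorem mul_sum_pow_card_filter_lt {α R : Type*} [LinearOrder α] [CommRing R] (x : R)
    (U : Finset α) :
    (x - 1) * ∑ b ∈ U, x ^ (U.filter (· < b)).card = x ^ U.card - 1 := by
  induction U using Finset.induction_on_max with
  | empty => simp
  | insert a s hs ih =>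
    have ha : a ∉ s := fun h => lt_irrefl a (hs a h)
    have hlt : ∀ b ∈ s, (insert a s).filter (· < b) = s.filter (· < b) := fun b hb => by
      rw [Finset.filter_insert, if_neg (hs b hb).not_gt]
    have hself : (insert a s).filter (· < a) = s := by
      rw [Finset.filter_insert, if_neg (lt_irrefl a), Finset.filter_true_of_mem hs]
    rw [Finset.sum_insert ha, hself, Finset.sum_congr rfl fun b hb => by rw [hlt b hb],
      mul_add, ih, Finset.card_insert_of_notMem ha]
    ring

theorem centralCoeff_succ_one_add_X_pow {α : Type*} [LinearOrder α] (U : Finset α) (n : ℕ) :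
    centralCoeff (n + 1) ((1 + X) ^ (U.card + 1)) =
      centralCoeff n ((1 + X) ^ (U.card + 2)) + (centralCoeff n (1 + X) +
        ∑ b ∈ U, centralCoeff n ((1 + X) ^ ((U.filter (· < b)).card + 1))) := by
  have hsum := mul_sum_pow_card_filter_lt (1 + X : ℤ⟦X⟧) U
  rw [← map_sum, ← map_add, ← map_add]
  refine centralCoeff_succ_of_mul_eq ?_ n
  simp only [pow_succ _ (Finset.card _), ← Finset.sum_mul]
  linear_combination (-1 - X) * hsum

theorem centralCoeff_succ_one_add_X_pow_mul {α : Type*} [LinearOrder α] {G : ℤ⟦X⟧}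
    (hG : G * (1 - X) = 1) (U : Finset α) (n : ℕ) :
    centralCoeff (n + 1) ((1 + X) ^ (U.card + 1) * G) =
      centralCoeff n ((1 + X) ^ (U.card + 2) * G) +
        (centralCoeff n (1 + X) + centralCoeff n ((1 + X) * G) +
          ∑ b ∈ U, centralCoeff n ((1 + X) ^ ((U.filter (· < b)).card + 1) * G)) := by
  have hsum := mul_sum_pow_card_filter_lt (1 + X : ℤ⟦X⟧) U
  rw [← map_sum, ← map_add, ← map_add, ← map_add]
  refine centralCoeff_succ_of_mul_eq ?_ n
  simp only [pow_succ _ (Finset.card _), ← Finset.sum_mul]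
  linear_combination (-1 - X) * G * hsum + (1 + X) * hG

theorem centralCoeff_one_add_X_mul {G : ℤ⟦X⟧} (hG : G * (1 - X) = 1) (n : ℕ) :
    centralCoeff n ((1 + X) * G) = 3 ^ n := by
  induction n with
  | zero =>
    rw [centralCoeff_zero]
    simpa using congrArg constantCoeff hG
  | succ n ih =>
    have hstep : (1 + X) * G * (1 + X + X ^ 2) =
        X * ((3 : ℤ) • ((1 + X) * G)) + (1 - X ^ 2) := by
      rw [zsmul_eq_mul]
      push_cast
      linear_combination (1 + X) * (1 - X) * hG
    rw [centralCoeff_succ_of_mul_eq hstep, map_zsmul, ih, smul_eq_mul, pow_succ']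

end CentralCoeff

section Avoiding12321

local notation "T₁" => ({[1, 2, 1, 2], [1, 2, 3, 2, 1]} : Set (List ℕ))

variable {w u : List ℕ} {b c x : ℕ}

theorem endsInRepeats_of_mem_12321 : ∀ p ∈ T₁, EndsInRepeats p := by
  rintro p (rfl | rfl)
  exacts [endsInRepeats_1212, endsInRepeats_12321]

theorem mem_activeLetters_12321_append (hb : Admissible T₁ (w ++ [b]))
    (hc : Admissible T₁ (w ++ [c])) (hcb : c ≤ b)
    (h : c < b → ∀ d, b < d → ¬ [c, b, d].Sublist w) : c ∈ activeLetters T₁ (w ++ [b]) := by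
  refine mem_activeLetters_append hb hc (by simp [hcb]) ?_
  rintro p (rfl | rfl)
  · exact patAvoids_1212_append_pair hcb (hb.2 _ (by simp)) (hc.2 _ (by simp))
  · exact patAvoids_12321_append_pair (hb.2 _ (by simp)) (hc.2 _ (by simp)) h

theorem self_mem_activeLetters_12321 (hb : Admissible T₁ (w ++ [b])) :
    b ∈ activeLetters T₁ (w ++ [b]) :=
  mem_activeLetters_12321_append hb hb le_rfl fun h => absurd h (lt_irrefl b)

theorem activeLetters_12321_append_last (h : Admissible T₁ (u ++ [x])) :
    activeLetters T₁ (u ++ [x] ++ [x]) = activeLetters T₁ (u ++ [x]) := by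
  refine (activeLetters_append_subset (by simp)).antisymm fun c hc => ?_
  have hcx : c ≤ x := le_of_mem_activeLetters_append (by simp) hc
  have hxx := (mem_activeLetters.1 (self_mem_activeLetters_12321 h)).2
  have hxc := (mem_activeLetters.1 hc).2
  refine mem_activeLetters_12321_append hxx hxc hcx fun hlt d hd hs => ?_
  -- Appending `c` to `u ++ [x]` would already complete the pattern `c x d x c`.
  have hs' : [c, x, d].Sublist u :=
    ((append_singleton_sublist_append_singleton (s := [c, x])).1 hs).resolve_right
      fun h => hd.ne' h.1
  exact hxc.2 [1, 2, 3, 2, 1] (by simp)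
    (patContains_12321 hlt hd (by simpa using hs'.append_right [x, c]))

theorem activeLetters_12321_append_of_ne_last (hb : b ∈ activeLetters T₁ (u ++ [x]))
    (hbx : b ≠ x) : activeLetters T₁ (u ++ [x] ++ [b]) = {b} := by
  obtain ⟨-, hadm⟩ := mem_activeLetters.1 hb
  obtain ⟨hrgf, hb1, -⟩ := isRGF_append_singleton.1 hadm.1
  have hlt : b < x := (le_of_mem_activeLetters_append (by simp) hb).lt_of_ne hbx
  refine Finset.eq_singleton_iff_unique_mem.2 ⟨self_mem_activeLetters_12321 hadm, fun c hc => ?_⟩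
  by_contra hne
  have hcb : c < b := (le_of_mem_activeLetters_append (by simp) hc).lt_of_ne hne
  obtain ⟨-, hadm', hav⟩ := mem_activeLetters.1 hc
  have hc1 : 1 ≤ c := (isRGF_append_singleton.1 hadm').2.1
  have hbxs : [b, x].Sublist (u ++ [x]) := hrgf.cons_sublist_of_lt (by simp) hb1 hlt
  have hs : [c, b, x].Sublist (u ++ [x]) := hrgf.cons_sublist_of_lt hbxs hc1 hcb
  exact hav [1, 2, 3, 2, 1] (by simp)
    (patContains_12321 hcb hlt (by simpa using hs.append_right [b, c]))

theorem two_mul_extCount_12321 (n : ℕ) (h : Admissible T₁ (u ++ [x])) :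
    2 * extCount T₁ n (u ++ [x]) + (activeLetters T₁ (u ++ [x])).card =
      3 ^ n * (activeLetters T₁ (u ++ [x])).card + 2 := by
  have hT := endsInRepeats_of_mem_12321
  induction n generalizing u x with
  | zero => rw [extCount_zero, pow_zero, one_mul, mul_one, add_comm]
  | succ n ih =>
    set w := u ++ [x] with hw
    set L := activeLetters T₁ w with hL
    have hx : x ∈ L := self_mem_activeLetters_12321 h
    have hnew := ih (h.append_maxLetter_succ hT)
    rw [activeLetters_append_maxLetter_succ hT h,
      Finset.card_insert_of_notMem maxLetter_succ_notMem_activeLetters, ← hL] at hnew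
    have hlast := ih (mem_activeLetters.1 hx).2
    rw [activeLetters_12321_append_last h, ← hw, ← hL] at hlast
    have hlow : ∀ b ∈ L.erase x, 2 * extCount T₁ n (w ++ [b]) = 3 ^ n + 1 := fun b hb => by
      obtain ⟨hbx, hb⟩ := Finset.mem_erase.1 hb
      have := ih (mem_activeLetters.1 hb).2
      rw [activeLetters_12321_append_of_ne_last hb hbx, Finset.card_singleton] at this
      omega
    have hsum : 2 * ∑ b ∈ L.erase x, extCount T₁ n (w ++ [b]) =
        (L.erase x).card * (3 ^ n + 1) := by
      rw [Finset.mul_sum, Finset.sum_congr rfl hlow, Finset.sum_const, smul_eq_mul]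
    rw [extCount_succ hT h, ← hL, ← Finset.add_sum_erase _ _ hx]
    rw [← Finset.card_erase_add_one hx] at hnew hlast ⊢
    linear_combination hnew + hlast + hsum

theorem two_mul_pCount_12321_succ (n : ℕ) : 2 * pCount (n + 1) T₁ = 3 ^ n + 1 := by
  have hT := endsInRepeats_of_mem_12321
  have h := two_mul_extCount_12321 (u := []) n (admissible_singleton_one hT)
  rw [List.nil_append, activeLetters_singleton_one hT, Finset.card_singleton] at h
  rw [pCount_succ hT]
  omega

end Avoiding12321

section Avoiding12333

open PowerSeries

local notation "T₂" => ({[1, 2, 1, 2], [1, 2, 3, 3, 3]} : Set (List ℕ))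

variable {w : List ℕ} {b c : ℕ}

theorem endsInRepeats_of_mem_12333 : ∀ p ∈ T₂, EndsInRepeats p := by
  rintro p (rfl | rfl)
  exacts [endsInRepeats_1212, endsInRepeats_12333]

theorem mem_activeLetters_12333_append (hb : Admissible T₂ (w ++ [b]))
    (hc : Admissible T₂ (w ++ [c])) (hcb : c ≤ b) (h : b = c → b ≤ 2) :
    c ∈ activeLetters T₂ (w ++ [b]) := by
  refine mem_activeLetters_append hb hc (by simp [hcb]) ?_
  rintro p (rfl | rfl)
  · exact patAvoids_1212_append_pair hcb (hb.2 _ (by simp)) (hc.2 _ (by simp))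
  · exact patAvoids_12333_append_pair hb.1.of_append.1 (hb.2 _ (by simp)) (hc.2 _ (by simp)) h

theorem activeLetters_12333_append_of_le_two (hb : b ∈ activeLetters T₂ w) (hb2 : b ≤ 2) :
    activeLetters T₂ (w ++ [b]) = (activeLetters T₂ w).filter (· ≤ b) := by
  obtain ⟨hle, hadm⟩ := mem_activeLetters.1 hb
  ext c
  rw [Finset.mem_filter]
  refine ⟨fun hc => ⟨activeLetters_append_subset hle hc,
    le_of_mem_activeLetters_append (by simp) hc⟩, fun ⟨hc, hcb⟩ => ?_⟩
  exact mem_activeLetters_12333_append hadm (mem_activeLetters.1 hc).2 hcb fun _ => hb2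

theorem self_notMem_activeLetters_12333 (hb : b ∈ activeLetters T₂ w) (hb3 : 3 ≤ b) :
    b ∉ activeLetters T₂ (w ++ [b]) := by
  intro hbb
  obtain ⟨hle, hadm⟩ := mem_activeLetters.1 hb
  have hrgf : IsRGF w := hadm.1.of_append
  have hbw : [b].Sublist w :=
    List.singleton_sublist.2 (hrgf.mem_of_le_maxLetter (by omega) hle)
  have h2b : [2, b].Sublist w := hrgf.cons_sublist_of_lt hbw (by omega) (by omega)
  have h12b : [1, 2, b].Sublist w := hrgf.cons_sublist_of_lt h2b le_rfl (by omega)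
  exact (mem_activeLetters.1 hbb).2.2 [1, 2, 3, 3, 3] (by simp)
    (patContains_12333 one_lt_two hb3 (by simpa using h12b.append_right [b, b]))

theorem activeLetters_12333_append_of_three_le (hb : b ∈ activeLetters T₂ w) (hb3 : 3 ≤ b) :
    activeLetters T₂ (w ++ [b]) = (activeLetters T₂ w).filter (· < b) := by
  obtain ⟨hle, hadm⟩ := mem_activeLetters.1 hb
  ext c
  rw [Finset.mem_filter]
  refine ⟨fun hc => ⟨activeLetters_append_subset hle hc, ?_⟩, fun ⟨hc, hcb⟩ => ?_⟩
  · refine (le_of_mem_activeLetters_append (by simp) hc).lt_of_ne ?_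
    rintro rfl
    exact self_notMem_activeLetters_12333 hb hb3 hc
  · exact mem_activeLetters_12333_append hadm (mem_activeLetters.1 hc).2 hcb.le
      fun h => absurd h hcb.ne'

/-- The active letters at most `2`, which can be repeated without completing `12333`. -/
noncomputable def lowLetters (w : List ℕ) : Finset ℕ := {b ∈ activeLetters T₂ w | b ≤ 2}

/-- The active letters at least `3`, each of which can be repeated only once more. -/
noncomputable def highLetters (w : List ℕ) : Finset ℕ := {b ∈ activeLetters T₂ w | 2 < b}

theorem mem_lowLetters : b ∈ lowLetters w ↔ b ∈ activeLetters T₂ w ∧ b ≤ 2 :=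
  Finset.mem_filter

theorem mem_highLetters : b ∈ highLetters w ↔ b ∈ activeLetters T₂ w ∧ 2 < b :=
  Finset.mem_filter

theorem lowLetters_append_maxLetter_succ (h : Admissible T₂ w) (hm : 2 ≤ maxLetter w) :
    lowLetters (w ++ [maxLetter w + 1]) = lowLetters w := by
  rw [lowLetters, activeLetters_append_maxLetter_succ endsInRepeats_of_mem_12333 h,
    Finset.filter_insert, if_neg (by omega), lowLetters]

theorem card_highLetters_append_maxLetter_succ (h : Admissible T₂ w) (hm : 2 ≤ maxLetter w) :
    (highLetters (w ++ [maxLetter w + 1])).card = (highLetters w).card + 1 := by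
  have hnew : maxLetter w + 1 ∉ highLetters w := fun h =>
    maxLetter_succ_notMem_activeLetters (mem_highLetters.1 h).1
  rw [← Finset.card_insert_of_notMem hnew, highLetters,
    activeLetters_append_maxLetter_succ endsInRepeats_of_mem_12333 h, Finset.filter_insert,
    if_pos (by omega), highLetters]

theorem lowLetters_append_of_mem_lowLetters (hb : b ∈ lowLetters w) :
    lowLetters (w ++ [b]) = (lowLetters w).filter (· ≤ b) := by
  obtain ⟨hb, hb2⟩ := mem_lowLetters.1 hb
  rw [lowLetters, activeLetters_12333_append_of_le_two hb hb2, lowLetters, Finset.filter_comm]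

theorem highLetters_append_of_mem_lowLetters (hb : b ∈ lowLetters w) :
    highLetters (w ++ [b]) = ∅ := by
  obtain ⟨-, hb2⟩ := mem_lowLetters.1 hb
  refine Finset.filter_eq_empty_iff.2 fun c hc => ?_
  exact ((le_of_mem_activeLetters_append (by simp) hc).trans hb2).not_gt

theorem lowLetters_append_of_mem_highLetters (hb : b ∈ highLetters w) :
    lowLetters (w ++ [b]) = lowLetters w := by
  obtain ⟨hb, hb3⟩ := mem_highLetters.1 hb
  rw [lowLetters, activeLetters_12333_append_of_three_le hb hb3, Finset.filter_filter]
  refine Finset.filter_congr fun c _ => ?_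
  omega

theorem highLetters_append_of_mem_highLetters (hb : b ∈ highLetters w) :
    highLetters (w ++ [b]) = (highLetters w).filter (· < b) := by
  obtain ⟨hb, hb3⟩ := mem_highLetters.1 hb
  rw [highLetters, activeLetters_12333_append_of_three_le hb hb3, highLetters,
    Finset.filter_comm]

theorem admissible_append_of_mem_lowLetters (hb : b ∈ lowLetters w) :
    Admissible T₂ (w ++ [b]) :=
  (mem_activeLetters.1 (mem_lowLetters.1 hb).1).2

theorem extCount_12333_succ (h : Admissible T₂ w) (hm : 2 ≤ maxLetter w) {n : ℕ} {F : ℕ → ℤ}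
    (hF : ∀ v, Admissible T₂ v → 2 ≤ maxLetter v → lowLetters v = lowLetters w →
      (extCount T₂ n v : ℤ) = F (highLetters v).card) :
    (extCount T₂ (n + 1) w : ℤ) = F ((highLetters w).card + 1) +
      (∑ b ∈ lowLetters w, (extCount T₂ n (w ++ [b]) : ℤ) +
        ∑ b ∈ highLetters w, F ((highLetters w).filter (· < b)).card) := by
  have hT := endsInRepeats_of_mem_12333
  have hnew := hF _ (h.append_maxLetter_succ hT) (by rw [maxLetter_append_singleton]; omega)
    (lowLetters_append_maxLetter_succ h hm)
  rw [card_highLetters_append_maxLetter_succ h hm] at hnew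
  have hhigh : ∀ b ∈ highLetters w, (extCount T₂ n (w ++ [b]) : ℤ) =
      F ((highLetters w).filter (· < b)).card := fun b hb => by
    have hadm := (mem_activeLetters.1 (mem_highLetters.1 hb).1).2
    rw [hF _ hadm (by simp [hm]) (lowLetters_append_of_mem_highLetters hb),
      highLetters_append_of_mem_highLetters hb]
  have hsplit := Finset.sum_filter_add_sum_filter_not (activeLetters T₂ w) (· ≤ 2)
    fun b => (extCount T₂ n (w ++ [b]) : ℤ)
  simp only [not_le] at hsplit
  rw [extCount_succ hT h, Nat.cast_add, Nat.cast_sum, hnew, ← hsplit, ← Finset.sum_congr rfl hhigh,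
    lowLetters, highLetters]

theorem extCount_12333_of_lowLetters_eq_one (n : ℕ) (h : Admissible T₂ w)
    (hm : 2 ≤ maxLetter w) (hlow : lowLetters w = {1}) :
    (extCount T₂ n w : ℤ) = centralCoeff n ((1 + X) ^ ((highLetters w).card + 1)) := by
  induction n generalizing w with
  | zero => simp [centralCoeff_zero]
  | succ n ih =>
    have h1 : 1 ∈ lowLetters w := by simp [hlow]
    have hone := ih (admissible_append_of_mem_lowLetters h1) (by simp [hm])
      (by rw [lowLetters_append_of_mem_lowLetters h1, hlow]; rfl)
    rw [highLetters_append_of_mem_lowLetters h1, Finset.card_empty, zero_add, pow_one] at hone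
    rw [extCount_12333_succ (F := fun m => centralCoeff n ((1 + X) ^ (m + 1))) h hm
      fun v hv hmv hlv => ih hv hmv (hlv.trans hlow), hlow, Finset.sum_singleton, hone,
      centralCoeff_succ_one_add_X_pow]

theorem extCount_12333_of_lowLetters_eq_one_two (n : ℕ) (h : Admissible T₂ w)
    (hm : 2 ≤ maxLetter w) (hlow : lowLetters w = {1, 2}) {G : ℤ⟦X⟧} (hG : G * (1 - X) = 1) :
    (extCount T₂ n w : ℤ) = centralCoeff n ((1 + X) ^ ((highLetters w).card + 1) * G) := by
  induction n generalizing w with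
  | zero =>
    have hG0 : constantCoeff G = 1 := by simpa using congrArg constantCoeff hG
    simp [centralCoeff_zero, hG0]
  | succ n ih =>
    have h1 : 1 ∈ lowLetters w := by simp [hlow]
    have h2 : 2 ∈ lowLetters w := by simp [hlow]
    have hone := extCount_12333_of_lowLetters_eq_one n (admissible_append_of_mem_lowLetters h1)
      (by simp [hm]) (by rw [lowLetters_append_of_mem_lowLetters h1, hlow]; rfl)
    have htwo := ih (admissible_append_of_mem_lowLetters h2) (by simp)
      (by rw [lowLetters_append_of_mem_lowLetters h2, hlow]; rfl)
    rw [highLetters_append_of_mem_lowLetters h1, Finset.card_empty, zero_add, pow_one] at hone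
    rw [highLetters_append_of_mem_lowLetters h2, Finset.card_empty, zero_add, pow_one] at htwo
    rw [extCount_12333_succ (F := fun m => centralCoeff n ((1 + X) ^ (m + 1) * G)) h hm
      fun v hv hmv hlv => ih hv hmv (hlv.trans hlow), hlow, Finset.sum_pair (by simp), hone,
      htwo, centralCoeff_succ_one_add_X_pow_mul hG]

theorem extCount_12333_append_two (n : ℕ) (h : Admissible T₂ w) (hm : maxLetter w = 1)
    (hw : activeLetters T₂ w = {1}) : extCount T₂ n (w ++ [2]) = 3 ^ n := by
  have hT := endsInRepeats_of_mem_12333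
  have hG : (mk 1 : ℤ⟦X⟧) * (1 - X) = 1 := mk_one_mul_one_sub_eq_one ℤ
  have hadm := h.append_maxLetter_succ hT
  have hactive := activeLetters_append_maxLetter_succ hT h
  rw [hm] at hadm hactive
  rw [hw] at hactive
  have hlow : lowLetters (w ++ [2]) = {1, 2} := by rw [lowLetters, hactive]; decide
  have hhigh : highLetters (w ++ [2]) = ∅ := by rw [highLetters, hactive]; decide
  have hcount := extCount_12333_of_lowLetters_eq_one_two n hadm (by simp) hlow hG
  rw [hhigh, Finset.card_empty, zero_add, pow_one, centralCoeff_one_add_X_mul hG] at hcount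
  exact_mod_cast hcount

theorem two_mul_extCount_12333 (n : ℕ) (h : Admissible T₂ w) (hm : maxLetter w = 1)
    (hw : activeLetters T₂ w = {1}) : 2 * extCount T₂ n w = 3 ^ n + 1 := by
  induction n generalizing w with
  | zero => simp
  | succ n ih =>
    have h1 : 1 ∈ activeLetters T₂ w := by simp [hw]
    have hone := ih (mem_activeLetters.1 h1).2 (by simp [hm])
      (by rw [activeLetters_12333_append_of_le_two h1 one_le_two, hw]; rfl)
    rw [extCount_succ endsInRepeats_of_mem_12333 h, hw, Finset.sum_singleton, hm, mul_add, hone,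
      extCount_12333_append_two n h hm hw]
    ring

theorem two_mul_pCount_12333_succ (n : ℕ) : 2 * pCount (n + 1) T₂ = 3 ^ n + 1 := by
  have hT := endsInRepeats_of_mem_12333
  rw [pCount_succ hT]
  exact two_mul_extCount_12333 n (admissible_singleton_one hT) rfl (activeLetters_singleton_one hT)

end Avoiding12333

/-- Theorem 3.9: non-crossing partitions avoiding 12333 are equinumerous with
those avoiding 12321, and `2·p_n(1212, 12321) = 3^{n-1} + 1` for `n ≥ 1`. -/
theorem stmt13 :
    (∀ n : ℕ, pCount n {[1,2,1,2], [1,2,3,3,3]} = pCount n {[1,2,1,2], [1,2,3,2,1]}) ∧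
    (∀ n : ℕ, 1 ≤ n → 2 * pCount n {[1,2,1,2], [1,2,3,2,1]} = 3 ^ (n - 1) + 1) := by
  constructor
  · rintro (_ | n)
    · rw [pCount_eq_extCount endsInRepeats_of_mem_12333,
        pCount_eq_extCount endsInRepeats_of_mem_12321, extCount_zero, extCount_zero]
    · have h₁ := two_mul_pCount_12321_succ n
      have h₂ := two_mul_pCount_12333_succ n
      omega
  · rintro (_ | n) hn
    · exact absurd hn (by decide)
    · exact two_mul_pCount_12321_succ n
end
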